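/- Let S be a finite alphabet with complementation. If V, W ⊆ S^d are equivalent polybox codes, neither of which contains a twin pair, and |V| ≤ 11, then W = V. -/

import Mathlib

/-- `ES` is the set of all `B ⊆ S` containing exactly one letter from each
complementary pair `{s, s'}`. -/
def ESet {S : Type*} (c : S → S) : Set (Set S) :=
  {B | ∀ s, s ∈ B ↔ c s ∉ B}

/-- `Es = {B ∈ ES : s ∈ B}`. -/
def Eltr {S : Type*} (c : S → S) (s : S) : Set (Set S) :=
  {B | B ∈ ESet c ∧ s ∈ B}

/-- The equicomplementary realization `v̌ = Ev₁ × ⋯ × Ev_d` of a word `v ∈ S^d`,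
viewed as a box in the `d`-box `(ES)^d`. -/
def realize {S : Type*} (c : S → S) {d : ℕ} (v : Fin d → S) :
    Set (Fin d → Set S) :=
  {B | ∀ i, B i ∈ Eltr c (v i)}

/-- Words `u, v ∈ S^d` are dichotomous: some coordinate carries complementary
letters. -/
def Dichotomous {S : Type*} (c : S → S) {d : ℕ} (u v : Fin d → S) : Prop :=
  ∃ j, v j = c (u j)

/-- Words `u, v ∈ S^d` form a twin pair. -/
def TwinPair {S : Type*} (c : S → S) {d : ℕ} (u v : Fin d → S) : Prop :=
  ∃ j, v j = c (u j) ∧ ∀ i, i ≠ j → u i = v i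

/-- A polybox code: a set of pairwise dichotomous words. -/
def PolyboxCode {S : Type*} (c : S → S) {d : ℕ} (V : Set (Fin d → S)) : Prop :=
  ∀ u ∈ V, ∀ v ∈ V, u ≠ v → Dichotomous c u v

/-- Polybox codes `V, W ⊆ S^d` are equivalent if
`⋃_{v ∈ V} v̌ = ⋃_{w ∈ W} w̌`. -/
def Equivalent {S : Type*} (c : S → S) {d : ℕ}
    (V W : Set (Fin d → S)) : Prop :=
  (⋃ v ∈ V, realize c v) = ⋃ w ∈ W, realize c w

/-- A polybox code `V ⊆ S^d` is rigid if every polybox code equivalent to `V`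
equals `V`. -/
def Rigid {S : Type*} (c : S → S) {d : ℕ} (V : Set (Fin d → S)) : Prop :=
  ∀ W : Set (Fin d → S), PolyboxCode c W → Equivalent c V W → W = V

namespace PBC

open Function Finset Classical
set_option linter.unusedSectionVars false
set_option linter.deprecated false

/-- complementation laws -/
class CC {S : Type*} (c : S → S) : Prop where
  inv : ∀ s, c (c s) = s
  ne : ∀ s, c s ≠ s

/-- the points of `ES` as a type -/
abbrev EP {S : Type*} (c : S → S) := {B : Set S // ∀ s, s ∈ B ↔ c s ∉ B}

section basic
variable {S : Type*} {c : S → S} [hc : CC c] {d : ℕ}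

theorem cinj {a b : S} (h : c a = c b) : a = b := by
  rw [← hc.inv a, h, hc.inv]

theorem ne_c_symm {a b : S} (h : b ≠ c a) : a ≠ c b := by
  intro e; apply h; rw [e, hc.inv]

theorem exES (L : Set S) (hL : ∀ a ∈ L, ∀ b ∈ L, b ≠ c a) : ∃ B : EP c, ∀ a ∈ L, a ∈ B.1 := by
  obtain ⟨r, hr⟩ : ∃ r : S → S → Prop, IsWellOrder S r := ⟨WellOrderingRel, inferInstance⟩
  refine ⟨⟨{x | x ∈ L ∨ (c x ∉ L ∧ r x (c x))}, ?_⟩, fun a ha => Or.inl ha⟩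
  intro s
  simp only [Set.mem_setOf_eq, hc.inv, not_or, not_and]
  constructor
  · rintro (h | ⟨h1, h2⟩)
    · exact ⟨fun h' => hL s h _ h' rfl, fun h' => absurd h h'⟩
    · exact ⟨h1, fun _ h' => asymm h2 h'⟩
  · rintro ⟨h1, h2⟩
    by_cases hs : s ∈ L
    · exact Or.inl hs
    · refine Or.inr ⟨h1, ?_⟩
      rcases trichotomous_of r s (c s) with h | h | h
      · exact h
      · exact absurd h.symm (hc.ne s)
      · exact absurd h (h2 hs)

theorem es3 {a b x : S} (h1 : b ≠ c a) (h2 : x ≠ c a) (h3 : x ≠ c b) :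
    ∃ B : EP c, a ∈ B.1 ∧ b ∈ B.1 ∧ x ∈ B.1 := by
  obtain ⟨B, hB⟩ := exES (c := c) {a, b, x} (by
    have := ne_c_symm h1
    have := ne_c_symm h2
    have := ne_c_symm h3
    have := fun s => (hc.ne s).symm
    simp only [Set.mem_insert_iff, Set.mem_singleton_iff]
    rintro p (rfl | rfl | rfl) q (rfl | rfl | rfl) <;> simp_all)
  exact ⟨B, hB _ (by simp), hB _ (by simp), hB _ (by simp)⟩

theorem es2 {a b : S} (h1 : b ≠ c a) : ∃ B : EP c, a ∈ B.1 ∧ b ∈ B.1 := by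
  obtain ⟨B, h⟩ := es3 h1 h1 (hc.ne b).symm
  exact ⟨B, h.1, h.2.1⟩

theorem notboth (E : EP c) {a : S} (h : a ∈ E.1) (h' : c a ∈ E.1) : False := ((E.2 a).1 h) h'

theorem mem_c (E : EP c) {a : S} (h : a ∉ E.1) : c a ∈ E.1 := by
  by_contra h'; exact h ((E.2 a).2 h')

/-- membership on a set of coordinates -/
def InOn (T : Set (Fin d)) (B : Fin d → EP c) (v : Fin d → S) : Prop := ∀ t ∈ T, v t ∈ (B t).1

/-- membership in a box -/
def In (B : Fin d → EP c) (v : Fin d → S) : Prop := ∀ t, v t ∈ (B t).1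

variable (c) in
/-- two boxes meet -/
def Mt (u v : Fin d → S) : Prop := ∀ t, v t ≠ c (u t)

theorem Mt.symm {u v : Fin d → S} (h : Mt c u v) : Mt c v u := fun t => ne_c_symm (h t)

theorem mt_of_in {B : Fin d → EP c} {u v : Fin d → S} (h : In B u) (h' : In B v) : Mt c u v := by
  intro t e
  have := h' t
  rw [e] at this
  exact notboth _ (h t) this

theorem exOn {T : Set (Fin d)} {w x : Fin d → S} (h : ∀ t ∈ T, x t ≠ c (w t)) :
    ∃ B : Fin d → EP c, InOn T B w ∧ InOn T B x := by
  have : ∀ t, ∃ E : EP c, t ∈ T → (w t ∈ E.1 ∧ x t ∈ E.1) := by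
    intro t
    by_cases ht : t ∈ T
    · obtain ⟨E, hE⟩ := es2 (h t ht)
      exact ⟨E, fun _ => hE⟩
    · obtain ⟨E, hE⟩ := es2 (c := c) (hc.ne (w t)).symm
      exact ⟨E, fun h => absurd h ht⟩
  choose B hB using this
  exact ⟨B, fun t ht => (hB t ht).1, fun t ht => (hB t ht).2⟩

theorem exIn {w x : Fin d → S} (h : Mt c w x) : ∃ B : Fin d → EP c, In B w ∧ In B x := by
  obtain ⟨B, h1, h2⟩ := exOn (c := c) (T := Set.univ) (w := w) (x := x) (fun t _ => h t)
  exact ⟨B, fun t => h1 t trivial, fun t => h2 t trivial⟩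

theorem Mt.refl (w : Fin d → S) : Mt c w w := fun t => (hc.ne (w t)).symm

theorem exIn1 (w : Fin d → S) : ∃ B : Fin d → EP c, In B w := by
  obtain ⟨B, h, _⟩ := exIn (c := c) (Mt.refl w)
  exact ⟨B, h⟩

theorem cont {T : Set (Fin d)} {w x : Fin d → S} (h : ∀ t ∈ T, x t ≠ c (w t)) {t : Fin d}
    (ht : t ∈ T) {a : S}
    (hB : ∀ B : Fin d → EP c, InOn T B w → InOn T B x → a ∈ (B t).1) : a = w t ∨ a = x t := by
  by_contra hh
  rw [not_or] at hh
  obtain ⟨E, h1, h2, h3⟩ := es3 (c := c) (h t ht) (x := c a)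
    (fun e => hh.1 (cinj e)) (fun e => hh.2 (cinj e))
  obtain ⟨B, hw, hx⟩ := exOn h
  have key : ∀ u : Fin d → S, InOn T B u → u t ∈ E.1 → InOn T (update B t E) u := by
    intro u hu hE s hs
    by_cases e : s = t
    · subst e; simpa using hE
    · simpa [e] using hu s hs
  have := hB (update B t E) (key w hw h1) (key x hx h2)
  simp only [update_self] at this
  exact notboth _ this h3

theorem contIn {w x : Fin d → S} (h : Mt c w x) {t : Fin d} {a : S}
    (hB : ∀ B : Fin d → EP c, In B w → In B x → a ∈ (B t).1) : a = w t ∨ a = x t :=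
  cont (T := Set.univ) (fun t _ => h t) trivial
    (fun B h1 h2 => hB B (fun t => h1 t trivial) (fun t => h2 t trivial))

/-- flipping one complementary pair -/
def fl (r : S) (E : EP c) : EP c := ⟨{x | if x = r ∨ x = c r then x ∉ E.1 else x ∈ E.1}, by
  intro s
  have h1 : (c s = r ∨ c s = c r) ↔ (s = r ∨ s = c r) := by
    constructor
    · rintro (h | h)
      · right; rw [← h, hc.inv]
      · left; exact cinj h
    · rintro (h | h)
      · right; rw [h]
      · left; rw [h, hc.inv]
  simp only [Set.mem_setOf_eq, h1]
  split_ifs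
  · rw [not_not, E.2 s, not_not]
  · exact E.2 s⟩

theorem mem_fl {r x : S} {E : EP c} (h1 : x ≠ r) (h2 : x ≠ c r) : x ∈ (fl r E).1 ↔ x ∈ E.1 := by
  simp [fl, h1, h2]

theorem mem_fl_self {r : S} {E : EP c} : r ∈ (fl r E).1 ↔ r ∉ E.1 := by
  simp [fl]

theorem mem_fl_c {r : S} {E : EP c} : c r ∈ (fl r E).1 ↔ r ∈ E.1 := by
  rw [← not_iff_not (b := r ∈ E.1), ← mem_fl_self (r := r) (E := E), (fl r E).2 r]

theorem fl_fl (r : S) (E : EP c) : fl r (fl r E) = E := by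
  apply Subtype.ext
  ext x
  by_cases h1 : x = r
  · subst h1; rw [mem_fl_self, mem_fl_self, not_not]
  by_cases h2 : x = c r
  · subst h2; rw [mem_fl_c, mem_fl_self, E.2 r, not_not]
  · rw [mem_fl h1 h2, mem_fl h1 h2]

theorem fl_c (r : S) (E : EP c) : fl (c r) E = fl r E := by
  apply Subtype.ext
  ext x
  simp [fl, hc.inv, or_comm]

/-- flipping a point at one coordinate -/
def fp (B : Fin d → EP c) (i : Fin d) (r : S) : Fin d → EP c := update B i (fl r (B i))

theorem fp_fp (B : Fin d → EP c) (i : Fin d) (r : S) : fp (fp B i r) i r = B := by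
  simp [fp, fl_fl]

theorem fp_c (B : Fin d → EP c) (i : Fin d) (r : S) : fp B i (c r) = fp B i r := by
  simp [fp, fl_c]

theorem fp_same (B : Fin d → EP c) (i : Fin d) (r : S) : fp B i r i = fl r (B i) := by
  simp [fp]

theorem fp_ne (B : Fin d → EP c) {i t : Fin d} (h : t ≠ i) (r : S) : fp B i r t = B t := by
  simp [fp, h]

theorem in_fp {B : Fin d → EP c} {i : Fin d} {r : S} {v : Fin d → S} (h1 : v i ≠ r)
    (h2 : v i ≠ c r) : In (fp B i r) v ↔ In B v := by
  unfold In
  refine forall_congr' fun t => ?_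
  by_cases e : t = i
  · subst e; rw [fp_same, mem_fl h1 h2]
  · rw [fp_ne _ e]

theorem in_fp_sw {B : Fin d → EP c} {i : Fin d} {r : S} {v : Fin d → S} (h : In B v)
    (h1 : v i = r) : In (fp B i r) (update v i (c r)) := by
  intro t
  by_cases e : t = i
  · subst e; rw [fp_same, update_self, mem_fl_c, ← h1]; exact h t
  · rw [fp_ne _ e, update_of_ne e]; exact h t

theorem fp_notin {B : Fin d → EP c} {i : Fin d} {r : S} {u v : Fin d → S} (h : In B u)
    (h1 : u i = r) (h2 : v i = r) : ¬ In (fp B i r) v := by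
  intro hv
  have := hv i
  rw [fp_same, h2, mem_fl_self] at this
  exact this (h1 ▸ h i)

end basic

end PBC
namespace PBC
open Function Finset Classical
set_option linter.unusedSectionVars false

section codes
variable {S : Type*} {c : S → S} [hc : CC c] {d : ℕ}

variable (c) in
/-- polybox code -/
def Code (V : Finset (Fin d → S)) : Prop := ∀ u ∈ V, ∀ v ∈ V, u ≠ v → ∃ t, v t = c (u t)

variable (c) in
/-- twin pair free -/
def TF (V : Finset (Fin d → S)) : Prop := ∀ u ∈ V, ∀ j, update u j (c (u j)) ∉ V

variable (c) in
/-- the box of `v` is covered by `V` -/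
def Cov (V : Finset (Fin d → S)) (v : Fin d → S) : Prop :=
  ∀ B : Fin d → EP c, In B v → ∃ w ∈ V, In B w

variable (c) in
/-- words of `V` meeting `v` -/
noncomputable def fm (V : Finset (Fin d → S)) (v : Fin d → S) : Finset (Fin d → S) := V.filter (fun w => Mt c v w)

/-- words of `V` with letter `s` at `i` -/
noncomputable def fs (V : Finset (Fin d → S)) (i : Fin d) (s : S) : Finset (Fin d → S) := V.filter (fun w => w i = s)

theorem mem_fm {V : Finset (Fin d → S)} {v w : Fin d → S} : w ∈ fm c V v ↔ w ∈ V ∧ Mt c v w := by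
  simp [fm]

theorem mem_fs {V : Finset (Fin d → S)} {i : Fin d} {s : S} {w : Fin d → S} :
    w ∈ fs V i s ↔ w ∈ V ∧ w i = s := by
  simp [fs]

theorem fs_sub {V : Finset (Fin d → S)} {i : Fin d} {s : S} : fs V i s ⊆ V := filter_subset _ _
theorem fm_sub {V : Finset (Fin d → S)} {v : Fin d → S} : fm c V v ⊆ V := filter_subset _ _

theorem TF.tw {V : Finset (Fin d → S)} (h : TF c V) {u v : Fin d → S} (hu : u ∈ V) (hv : v ∈ V)
    (j : Fin d) (hj : v j = c (u j)) (he : ∀ t, t ≠ j → v t = u t) : False := by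
  apply h u hu j
  convert hv using 1
  funext t
  by_cases e : t = j
  · subst e; simp [hj]
  · simp [e, he t e]

theorem Code.uniq {V : Finset (Fin d → S)} (h : Code c V) {u v : Fin d → S} (hu : u ∈ V)
    (hv : v ∈ V) (hm : Mt c u v) : u = v := by
  by_contra hne
  obtain ⟨t, ht⟩ := h u hu v hv hne
  exact hm t ht

theorem Code.uniqIn {V : Finset (Fin d → S)} (h : Code c V) {u v : Fin d → S} (hu : u ∈ V)
    (hv : v ∈ V) {B : Fin d → EP c} (h1 : In B u) (h2 : In B v) : u = v :=
  h.uniq hu hv (mt_of_in h1 h2)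

variable (c) in
/-- `P` and `Q` cut complementary pieces out of `v` -/
structure Rel (P Q : Finset (Fin d → S)) (v : Fin d → S) (i : Fin d) (r : S) : Prop where
  v1 : v i ≠ r
  v2 : v i ≠ c r
  hP : ∀ p ∈ P, p i = r ∧ Mt c v p
  hQ : ∀ q ∈ Q, q i = c r ∧ Mt c v q
  iff : ∀ B : Fin d → EP c, In B v → ((∃ p ∈ P, In B p) ↔ ∃ q ∈ Q, In (fp B i r) q)

theorem Rel.symm {P Q : Finset (Fin d → S)} {v : Fin d → S} {i : Fin d} {r : S}
    (h : Rel c P Q v i r) : Rel c Q P v i (c r) where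
  v1 := h.v2
  v2 := by rw [hc.inv]; exact h.v1
  hP := h.hQ
  hQ := by rw [hc.inv]; exact h.hP
  iff := by
    intro B hB
    rw [fp_c, h.iff _ ((in_fp h.v1 h.v2).2 hB), fp_fp]

theorem rel_half {V : Finset (Fin d → S)} (hV : Code c V) {v : Fin d → S} (hcov : Cov c V v)
    {i : Fin d} {r : S} (h1 : v i ≠ r) (h2 : v i ≠ c r) (B : Fin d → EP c) (hB : In B v)
    (p : Fin d → S) (hp : p ∈ V) (hpi : p i = r) (hBp : In B p) :
    ∃ q ∈ V, q i = c r ∧ In (fp B i r) q := by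
  obtain ⟨u, hu, hBu⟩ := hcov (fp B i r) ((in_fp h1 h2).2 hB)
  refine ⟨u, hu, ?_, hBu⟩
  by_contra hne
  by_cases e : u i = r
  · exact fp_notin hBp hpi e hBu
  · have := hV.uniqIn hu hp ((in_fp e hne).1 hBu) hBp
    exact e (this ▸ hpi)

theorem rel_of_cov {V : Finset (Fin d → S)} (hV : Code c V) {v : Fin d → S} (hcov : Cov c V v)
    {i : Fin d} {r : S} (h1 : v i ≠ r) (h2 : v i ≠ c r) :
    Rel c (fs (fm c V v) i r) (fs (fm c V v) i (c r)) v i r where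
  v1 := h1
  v2 := h2
  hP := fun p hp => ⟨(mem_fs.1 hp).2, (mem_fm.1 (mem_fs.1 hp).1).2⟩
  hQ := fun p hp => ⟨(mem_fs.1 hp).2, (mem_fm.1 (mem_fs.1 hp).1).2⟩
  iff := by
    intro B hB
    constructor
    · rintro ⟨p, hp, hBp⟩
      obtain ⟨hp1, hp2⟩ := mem_fs.1 hp
      obtain ⟨q, hq, hqi, hBq⟩ := rel_half hV hcov h1 h2 B hB p (mem_fm.1 hp1).1 hp2 hBp
      exact ⟨q, mem_fs.2 ⟨mem_fm.2 ⟨hq, mt_of_in ((in_fp h1 h2).2 hB) hBq⟩, hqi⟩, hBq⟩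
    · rintro ⟨p, hp, hBp⟩
      obtain ⟨hp1, hp2⟩ := mem_fs.1 hp
      obtain ⟨q, hq, hqi, hBq⟩ := rel_half hV hcov (r := c r) h2 (by rwa [hc.inv]) (fp B i r)
        ((in_fp h1 h2).2 hB) p (mem_fm.1 hp1).1 hp2 hBp
      rw [fp_c, fp_fp] at hBq
      rw [hc.inv] at hqi
      exact ⟨q, mem_fs.2 ⟨mem_fm.2 ⟨hq, mt_of_in hB hBq⟩, hqi⟩, hBq⟩

theorem rel_single {Q : Finset (Fin d → S)} {p v : Fin d → S} {i : Fin d} {r : S}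
    (h : Rel c {p} Q v i r) : Cov c Q (update p i (c r)) := by
  intro B hB
  obtain ⟨hpi, hpm⟩ := h.hP p (by simp)
  have hq : ∀ q ∈ Q, ∀ t, t ≠ i → p t = v t ∨ p t = q t := by
    intro q hq t ht
    apply contIn (h.hQ q hq).2
    intro A hA1 hA2
    have := (h.iff (fp A i r) ((in_fp h.v1 h.v2).2 hA1)).2 ⟨q, hq, by rwa [fp_fp]⟩
    obtain ⟨p', hp', hA'⟩ := this
    rw [mem_singleton] at hp'
    subst hp'
    have := hA' t
    rwa [fp_ne _ ht] at this
  have : ∀ t, ∃ E : EP c, v t ∈ E.1 ∧ p t ∈ E.1 ∧ (t ≠ i → p t = v t → E = B t) := by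
    intro t
    by_cases ht : t ≠ i ∧ p t = v t
    · refine ⟨B t, ?_, ?_, fun _ _ => rfl⟩
      · rw [← ht.2]; have := hB t; rwa [update_of_ne ht.1] at this
      · have := hB t; rwa [update_of_ne ht.1] at this
    · obtain ⟨E, h1, h2⟩ := es2 (hpm t)
      exact ⟨E, h1, h2, fun h1 h2 => absurd ⟨h1, h2⟩ ht⟩
  choose A hA1 hA2 hA3 using this
  obtain ⟨q, hqQ, hqA⟩ := (h.iff A hA1).1 ⟨p, by simp, hA2⟩
  refine ⟨q, hqQ, fun t => ?_⟩
  by_cases ht : t = i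
  · subst ht
    have := hB t
    rw [update_self] at this
    rwa [(h.hQ q hqQ).1]
  · by_cases hpv : p t = v t
    · rw [← hA3 t ht hpv, ← fp_ne A ht r]; exact hqA t
    · have := (hq q hqQ t ht).resolve_left hpv
      rw [← this]
      have := hB t
      rwa [update_of_ne ht] at this

theorem Cov.mono {V Q : Finset (Fin d → S)} {v : Fin d → S} (h : Cov c Q v) (hs : Q ⊆ V) :
    Cov c V v := fun B hB => by
  obtain ⟨w, hw, h⟩ := h B hB
  exact ⟨w, hs hw, h⟩

theorem cov_sub {V Q : Finset (Fin d → S)} (hV : Code c V) {v : Fin d → S} (h : Cov c Q v)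
    (hs : Q ⊆ V) : fm c V v ⊆ Q := by
  intro w hw
  obtain ⟨hw1, hw2⟩ := mem_fm.1 hw
  obtain ⟨B, h1, h2⟩ := exIn hw2
  obtain ⟨q, hq, h3⟩ := h B h1
  rw [hV.uniqIn hw1 (hs hq) h2 h3]; exact hq

theorem rel_sub {V P Q : Finset (Fin d → S)} (hV : Code c V) (hT : TF c V) {v : Fin d → S}
    {i : Fin d} {r : S} (hP : P ⊆ V) (hQ : Q ⊆ V) (h : Rel c P Q v i r) (h1 : P.card = 1) :
    ∃ u, Cov c V u ∧ u ∉ V ∧ fm c V u ⊆ Q := by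
  obtain ⟨p, rfl⟩ := card_eq_one.1 h1
  have := rel_single h
  refine ⟨_, this.mono hQ, ?_, cov_sub hV this hQ⟩
  rw [← (h.hP p (by simp)).1]
  exact hT p (hP (by simp)) i

theorem Rel.ne {P Q : Finset (Fin d → S)} {v : Fin d → S}
    {i : Fin d} {r : S} (h : Rel c P Q v i r) (h1 : P.Nonempty) : Q.Nonempty := by
  obtain ⟨p, hp⟩ := h1
  obtain ⟨B, hB1, hB2⟩ := exIn (h.hP p hp).2
  obtain ⟨q, hq, _⟩ := (h.iff B hB1).1 ⟨p, hp, hB2⟩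
  exact ⟨q, hq⟩

theorem fs_disj {V : Finset (Fin d → S)} {i : Fin d} {r s : S} (h : r ≠ s) :
    Disjoint (fs V i r) (fs V i s) := by
  rw [disjoint_left]
  intro a h1 h2
  exact h ((mem_fs.1 h1).2.symm.trans (mem_fs.1 h2).2)

theorem fs2_le {V : Finset (Fin d → S)} {i : Fin d} {r s : S} (h : r ≠ s) :
    (fs V i r).card + (fs V i s).card ≤ V.card := by
  rw [← card_union_of_disjoint (fs_disj h)]
  exact card_le_card (union_subset fs_sub fs_sub)

theorem fs4_le {V : Finset (Fin d → S)} {i : Fin d} {r q : S} (h1 : q ≠ r) (h2 : q ≠ c r) :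
    (fs V i r).card + (fs V i (c r)).card + ((fs V i q).card + (fs V i (c q)).card) ≤ V.card := by
  have hd : Disjoint (fs V i r ∪ fs V i (c r)) (fs V i q ∪ fs V i (c q)) := by
    rw [disjoint_union_left, disjoint_union_right, disjoint_union_right]
    exact ⟨⟨fs_disj (Ne.symm h1), fs_disj (ne_c_symm h2)⟩,
        fs_disj (Ne.symm h2), fs_disj fun e => h1 (cinj e).symm⟩
  have hle := card_le_card (union_subset (union_subset (fs_sub (V := V) (i := i) (s := r))
      (fs_sub (i := i) (s := c r))) (union_subset (fs_sub (i := i) (s := q)) (fs_sub (i := i) (s := c q))))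
  rw [card_union_of_disjoint hd, card_union_of_disjoint (fs_disj (hc.ne r).symm),
      card_union_of_disjoint (fs_disj (hc.ne _).symm)] at hle
  omega

theorem five {V : Finset (Fin d → S)} (hV : Code c V) (hT : TF c V) {v : Fin d → S}
    (hcov : Cov c V v) (hv : v ∉ V) : 5 ≤ (fm c V v).card := by
  induction hn : (fm c V v).card using Nat.strong_induction_on generalizing v with
  | _ n ih =>
  by_contra hlt
  have act : ∀ i r, v i ≠ r → v i ≠ c r → (fs (fm c V v) i r).Nonempty →
      2 ≤ (fs (fm c V v) i r).card := by
    intro i r h1 h2 hne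
    have hR := rel_of_cov hV hcov h1 h2
    by_contra hcon
    have h1 : (fs (fm c V v) i r).card = 1 := by
      have := hne.card_pos; omega
    obtain ⟨u, hu1, hu2, hu3⟩ := rel_sub hV hT (fs_sub.trans fm_sub) (fs_sub.trans fm_sub) hR h1
    have hle := card_le_card hu3
    have := fs2_le (V := fm c V v) (i := i) (hc.ne r).symm
    have := ih _ (by omega) hu1 hu2 rfl
    omega
  have act2 : ∀ i r, v i ≠ r → v i ≠ c r → (fs (fm c V v) i r).Nonempty →
      ∀ u ∈ fm c V v, u i = r ∨ u i = c r := by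
    intro i r h1 h2 hne u hu
    have hR := rel_of_cov hV hcov h1 h2
    have a1 := act i r h1 h2 hne
    have a2 := act i (c r) h2 (by rwa [hc.inv]) (hR.ne hne)
    by_contra hcon
    rw [not_or] at hcon
    have : (fs (fm c V v) i r) ∪ (fs (fm c V v) i (c r)) ⊆ (fm c V v).erase u := by
      intro x hx
      rw [mem_erase]
      rcases mem_union.1 hx with hx | hx
      · exact ⟨fun e => hcon.1 (e ▸ (mem_fs.1 hx).2), fs_sub hx⟩
      · exact ⟨fun e => hcon.2 (e ▸ (mem_fs.1 hx).2), fs_sub hx⟩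
    have := card_le_card this
    rw [card_union_of_disjoint (fs_disj (hc.ne r).symm), card_erase_of_mem hu] at this
    omega
  obtain ⟨B0, hB0⟩ := exIn1 (c := c) v
  obtain ⟨w, hw, hBw⟩ := hcov B0 hB0
  have hm := mt_of_in hB0 hBw
  have hwv : w ≠ v := fun e => hv (e ▸ hw)
  obtain ⟨i, hi⟩ := Function.ne_iff.1 hwv
  have hi' : v i ≠ c (w i) := ne_c_symm (hm i)
  obtain ⟨u, hu, hui, hBu⟩ := rel_half hV hcov (r := w i) hi.symm hi' B0 hB0 w hw rfl hBw
  have hmu : Mt c v u := mt_of_in ((in_fp hi.symm hi').2 hB0) hBu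
  refine hT.tw hw hu i hui ?_
  intro t ht
  by_cases hall : ∃ x ∈ fm c V v, x t ≠ v t
  · obtain ⟨x, hx, hxt⟩ := hall
    have h2 := ne_c_symm ((mem_fm.1 hx).2 t)
    have := act2 t (x t) hxt.symm h2 ⟨x, mem_fs.2 ⟨hx, rfl⟩⟩
    have hb1 := hBw t
    have hb2 := hBu t
    rw [fp_ne _ ht] at hb2
    rcases this u (mem_fm.2 ⟨hu, hmu⟩) with e1 | e1 <;> rcases this w (mem_fm.2 ⟨hw, hm⟩) with e2 | e2
    · rw [e1, e2]
    · rw [e1] at hb2; rw [e2] at hb1; exact (notboth _ hb2 hb1).elim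
    · rw [e1] at hb2; rw [e2] at hb1; exact (notboth _ hb1 hb2).elim
    · rw [e1, e2]
  · push Not at hall
    rw [hall u (mem_fm.2 ⟨hu, hmu⟩), hall w (mem_fm.2 ⟨hw, hm⟩)]

theorem Rel.five {V P Q : Finset (Fin d → S)} (hV : Code c V) (hT : TF c V) {v : Fin d → S}
    {i : Fin d} {r : S} (hP : P ⊆ V) (hQ : Q ⊆ V) (h : Rel c P Q v i r) (h1 : P.card = 1) :
    5 ≤ Q.card := by
  obtain ⟨u, h1, h2, h3⟩ := rel_sub hV hT hP hQ h h1
  exact (PBC.five hV hT h1 h2).trans (card_le_card h3)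

theorem Rel.two {V P Q : Finset (Fin d → S)} (hV : Code c V) (hT : TF c V) {v : Fin d → S}
    {i : Fin d} {r : S} (hP : P ⊆ V) (hQ : Q ⊆ V) (h : Rel c P Q v i r) (h1 : P.Nonempty)
    (h4 : P.card + Q.card ≤ 5) : 2 ≤ P.card ∧ 2 ≤ Q.card := by
  have a := h.ne h1
  have b := h.five hV hT hP hQ
  have e := h.symm.five hV hT hQ hP
  have := h1.card_pos
  have := a.card_pos
  constructor <;> by_contra hh
  · have := b (by omega); omega
  · have := e (by omega); omega

theorem Rel.four {V P Q : Finset (Fin d → S)} (hV : Code c V) (hT : TF c V) {v : Fin d → S}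
    {i : Fin d} {r : S} (hP : P ⊆ V) (hQ : Q ⊆ V) (h : Rel c P Q v i r) (h1 : P.Nonempty) :
    4 ≤ P.card + Q.card := by
  by_contra hh
  have := h.two hV hT hP hQ h1 (by omega)
  omega

theorem five_star {V : Finset (Fin d → S)} (hV : Code c V) (hT : TF c V) {v : Fin d → S}
    (hcov : Cov c V v) (hv : v ∉ V) (h5 : (fm c V v).card = 5) (t : Fin d) :
    ∃ w ∈ fm c V v, w t = v t := by
  by_contra hno
  push Not at hno
  have hne : (fm c V v).Nonempty := by rw [← card_pos]; omega
  obtain ⟨w, hw⟩ := hne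
  have hwt := hno w hw
  have hm := (mem_fm.1 hw).2
  set r := w t with hr
  have h1 : v t ≠ r := hwt.symm
  have h2 : v t ≠ c r := ne_c_symm (hm t)
  have hR := rel_of_cov hV hcov h1 h2
  have hne1 : (fs (fm c V v) t r).Nonempty := ⟨w, mem_fs.2 ⟨hw, rfl⟩⟩
  have hsum := fs2_le (V := fm c V v) (i := t) (hc.ne r).symm
  have h22 := hR.two hV hT (fs_sub.trans fm_sub) (fs_sub.trans fm_sub) hne1 (by omega)
  have hall : ∀ u ∈ fm c V v, u t = r ∨ u t = c r := by
    intro u hu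
    by_contra hcon
    rw [not_or] at hcon
    have hR' := rel_of_cov hV hcov (i := t) (r := u t) (hno u hu).symm (ne_c_symm ((mem_fm.1 hu).2 t))
    have := hR'.four hV hT (fs_sub.trans fm_sub) (fs_sub.trans fm_sub) ⟨u, mem_fs.2 ⟨hu, rfl⟩⟩
    have := fs4_le (V := fm c V v) (i := t) (c := c) hcon.1 hcon.2
    omega
  have hcv : Cov c (fs (fm c V v) t r) (update v t r) := by
    intro B hB
    obtain ⟨E, hE1, hE2⟩ := es2 (c := c) (a := v t) (b := r) (hm t)
    obtain ⟨u, hu, hBu⟩ := hcov (update B t E) (by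
      intro s
      by_cases e : s = t
      · subst e; simpa using hE1
      · have := hB s
        rw [update_of_ne e] at this ⊢
        exact this)
    have hmu : Mt c v u := by
      refine mt_of_in (B := update B t E) ?_ hBu
      intro s
      by_cases e : s = t
      · subst e; simpa using hE1
      · have := hB s
        rw [update_of_ne e] at this ⊢
        exact this
    have hut : u t = r := by
      rcases hall u (mem_fm.2 ⟨hu, hmu⟩) with e | e
      · exact e
      · have := hBu t
        rw [e, update_self] at this
        exact (notboth _ hE2 this).elim
    refine ⟨u, mem_fs.2 ⟨mem_fm.2 ⟨hu, hmu⟩, hut⟩, fun s => ?_⟩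
    by_cases e : s = t
    · subst e; rw [hut]; have := hB s; rwa [update_self] at this
    · have := hBu s
      rwa [update_of_ne e] at this
  by_cases hmem : update v t r ∈ V
  · have : fs (fm c V v) t r ⊆ {update v t r} := by
      intro u hu
      rw [mem_singleton]
      obtain ⟨hu1, hu2⟩ := mem_fs.1 hu
      obtain ⟨hu3, hu4⟩ := mem_fm.1 hu1
      refine hV.uniq hu3 hmem (Mt.symm ?_)
      intro s
      by_cases e : s = t
      · subst e; rw [update_self, hu2]; exact (hc.ne r).symm
      · rw [update_of_ne e]; exact hu4 s
    have := card_le_card this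
    rw [card_singleton] at this
    omega
  · have := (five hV hT (hcv.mono (fs_sub.trans fm_sub)) hmem).trans
      (card_le_card (cov_sub hV hcv (fs_sub.trans fm_sub)))
    omega

end codes
end PBC
namespace PBC
open Function Finset Classical
set_option linter.unusedSectionVars false
set_option linter.unusedVariables false

section counting
variable {S : Type*} {c : S → S} [hc : CC c] {d : ℕ}

theorem half [Fintype (EP c)] (a : S) :
    2 * (univ.filter (fun E : EP c => a ∈ E.1)).card = Fintype.card (EP c) := by
  have h1 := card_filter_add_card_filter_not (s := (univ : Finset (EP c))) (fun E : EP c => a ∈ E.1)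
  have h2 : (univ.filter (fun E : EP c => a ∈ E.1)).card =
      (univ.filter (fun E : EP c => a ∉ E.1)).card := by
    refine card_bij' (fun E _ => fl a E) (fun E _ => fl a E) ?_ ?_ ?_ ?_
    · intro E hE
      simp only [mem_filter, mem_univ, true_and] at hE ⊢
      rw [mem_fl_self]; exact not_not.2 hE
    · intro E hE
      simp only [mem_filter, mem_univ, true_and] at hE ⊢
      rw [mem_fl_self]; exact hE
    · intro E _; exact fl_fl a E
    · intro E _; exact fl_fl a E
  rw [card_univ] at h1
  omega

theorem nb_const [Fintype (EP c)] (u v : Fin d → S) :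
    (univ.filter (fun B : Fin d → EP c => In B u)).card =
      (univ.filter (fun B : Fin d → EP c => In B v)).card := by
  have key : ∀ u : Fin d → S, (univ.filter (fun B : Fin d → EP c => In B u)).card =
      ∏ t : Fin d, (univ.filter (fun E : EP c => u t ∈ E.1)).card := by
    intro u
    rw [← Fintype.card_piFinset]
    congr 1
    ext B
    rw [mem_filter, Fintype.mem_piFinset]
    simp only [mem_filter, mem_univ, true_and]
    rfl
  rw [key, key]
  refine prod_congr rfl fun t _ => ?_
  have := half (c := c) (u t)
  have := half (c := c) (v t)
  omega

theorem sum_pts [Fintype (EP c)] {V : Finset (Fin d → S)} (hV : Code c V)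
    (f : (Fin d → EP c) → ℤ) :
    ∑ B ∈ univ.filter (fun B : Fin d → EP c => ∃ v ∈ V, In B v), f B =
      ∑ v ∈ V, ∑ B ∈ univ.filter (fun B : Fin d → EP c => In B v), f B := by
  rw [← sum_biUnion]
  · refine sum_congr ?_ fun _ _ => rfl
    ext B
    simp
  · intro u hu v hv hne
    simp only [Function.onFun]
    rw [disjoint_left]
    intro B h1 h2
    simp only [mem_filter, mem_univ, true_and] at h1 h2
    exact hne (hV.uniqIn hu hv h1 h2)

theorem count_eq [Fintype S] {V W : Finset (Fin d → S)} (hV : Code c V) (hW : Code c W)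
    (he : ∀ B : Fin d → EP c, (∃ v ∈ V, In B v) ↔ ∃ w ∈ W, In B w) :
    V.card = W.card ∧ ∀ i s, (fs V i s).card + (fs W i (c s)).card =
      (fs V i (c s)).card + (fs W i s).card := by
  haveI : Fintype (EP c) := Fintype.ofFinite _
  by_cases hne : Nonempty (Fin d → S)
  swap
  · have : ∀ X : Finset (Fin d → S), X = ∅ := fun X =>
      eq_empty_of_forall_notMem fun x _ => hne ⟨x⟩
    have h1 := this V
    have h2 := this W
    subst h1 h2
    simp [fs]
  obtain ⟨v0⟩ := hne
  set K : ℤ := ((univ.filter (fun B : Fin d → EP c => In B v0)).card : ℤ) with hK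
  have hKpos : K ≠ 0 := by
    obtain ⟨B, hB⟩ := exIn1 (c := c) v0
    have : 0 < (univ.filter (fun B : Fin d → EP c => In B v0)).card :=
      card_pos.2 ⟨B, by simpa using hB⟩
    rw [hK]; exact_mod_cast this.ne'
  have hKv : ∀ v : Fin d → S, ((univ.filter (fun B : Fin d → EP c => In B v)).card : ℤ) = K := by
    intro v; rw [hK, nb_const v v0]
  have hfil : (univ.filter (fun B : Fin d → EP c => ∃ v ∈ V, In B v)) =
      univ.filter (fun B : Fin d → EP c => ∃ v ∈ W, In B v) := by
    ext B; simpa using he B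
  have key : ∀ f : (Fin d → EP c) → ℤ,
      ∑ v ∈ V, ∑ B ∈ univ.filter (fun B : Fin d → EP c => In B v), f B =
      ∑ v ∈ W, ∑ B ∈ univ.filter (fun B : Fin d → EP c => In B v), f B := by
    intro f
    rw [← sum_pts hV, ← sum_pts hW, hfil]
  constructor
  · have := key (fun _ => 1)
    simp only [sum_const, nsmul_eq_mul, mul_one, hKv] at this
    exact_mod_cast mul_right_cancel₀ hKpos this
  · intro i s
    have hs : ∀ v : Fin d → S, ∑ B ∈ univ.filter (fun B : Fin d → EP c => In B v),
        (if s ∈ (B i).1 then (1 : ℤ) else -1) =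
        K * ((if v i = s then 1 else 0) - (if v i = c s then 1 else 0)) := by
      intro v
      by_cases h1 : v i = s
      · have h2 : v i ≠ c s := by rw [h1]; exact (hc.ne s).symm
        rw [if_pos h1, if_neg h2, sum_congr rfl (g := fun _ => (1 : ℤ))]
        · simp [hKv]
        · intro B hB
          simp only [mem_filter, mem_univ, true_and] at hB
          rw [if_pos (h1 ▸ hB i)]
      by_cases h2 : v i = c s
      · rw [if_neg h1, if_pos h2, sum_congr rfl (g := fun _ => (-1 : ℤ))]
        · simp [hKv]
        · intro B hB
          simp only [mem_filter, mem_univ, true_and] at hB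
          rw [if_neg]
          intro h
          have := hB i
          rw [h2] at this
          exact notboth _ h this
      · rw [if_neg h1, if_neg h2, sub_zero, mul_zero]
        have : ∑ B ∈ univ.filter (fun B : Fin d → EP c => In B v),
          (if s ∈ (B i).1 then (1 : ℤ) else -1) = ∑ B ∈ univ.filter (fun B : Fin d → EP c => In B v),
          - (if s ∈ (B i).1 then (1 : ℤ) else -1) := by
          refine sum_bij' (fun B _ => fp B i s) (fun B _ => fp B i s) ?_ ?_ ?_ ?_ ?_
          · intro B hB
            simp only [mem_filter, mem_univ, true_and] at hB ⊢
            exact (in_fp h1 h2).2 hB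
          · intro B hB
            simp only [mem_filter, mem_univ, true_and] at hB ⊢
            exact (in_fp h1 h2).2 hB
          · intro B _; exact fp_fp _ _ _
          · intro B _; exact fp_fp _ _ _
          · intro B _
            rw [fp_same]
            by_cases h : s ∈ (B i).1
            · rw [if_pos h, if_neg (by rw [mem_fl_self]; exact not_not.2 h)]; rfl
            · rw [if_neg h, if_pos (by rw [mem_fl_self]; exact h)]
        rw [sum_neg_distrib] at this
        omega
    have := key (fun B => if s ∈ (B i).1 then (1 : ℤ) else -1)
    simp only [hs] at this
    rw [← mul_sum, ← mul_sum] at this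
    have := mul_left_cancel₀ hKpos this
    simp only [sum_sub_distrib, sum_boole] at this
    unfold fs
    omega

end counting

section ctx
variable {S : Type*} {c : S → S} [hc : CC c] {d : ℕ}

variable (c) in
/-- the standing situation -/
structure Ctx (V W : Finset (Fin d → S)) : Prop where
  hV : Code c V
  hW : Code c W
  tV : TF c V
  tW : TF c W
  dj : ∀ v ∈ V, v ∉ W
  eq : ∀ B : Fin d → EP c, (∃ v ∈ V, In B v) ↔ ∃ w ∈ W, In B w
  n : V.card = W.card
  le : V.card ≤ 11
  bal : ∀ i s, (fs V i s).card + (fs W i (c s)).card = (fs V i (c s)).card + (fs W i s).card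

theorem Ctx.symm {V W : Finset (Fin d → S)} (h : Ctx c V W) : Ctx c W V where
  hV := h.hW
  hW := h.hV
  tV := h.tW
  tW := h.tV
  dj := fun w hw hv => h.dj w hv hw
  eq := fun B => (h.eq B).symm
  n := h.n.symm
  le := h.n ▸ h.le
  bal := fun i s => by have := h.bal i s; omega

variable (c) in
/-- the size parameter of a pair of letters -/
noncomputable def Mm (V W : Finset (Fin d → S)) (i : Fin d) (s : S) : ℕ :=
  (fs V i s).card + (fs W i (c s)).card

variable {V W : Finset (Fin d → S)}

theorem Ctx.M_c (h : Ctx c V W) (i : Fin d) (s : S) : Mm c V W i (c s) = Mm c V W i s := by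
  unfold Mm; rw [hc.inv, h.bal]

theorem Ctx.M_sw (h : Ctx c V W) (i : Fin d) (s : S) : Mm c W V i s = Mm c V W i s := by
  unfold Mm; rw [h.bal]; omega

theorem Ctx.M_def (h : Ctx c V W) (i : Fin d) (s : S) :
    (fs V i s).card + (fs W i (c s)).card = Mm c V W i s ∧
    (fs V i (c s)).card + (fs W i s).card = Mm c V W i s := by
  have := h.bal i s
  unfold Mm; omega

theorem Ctx.covW (h : Ctx c V W) {v : Fin d → S} (hv : v ∈ V) : Cov c W v :=
  fun B hB => (h.eq B).1 ⟨v, hv, hB⟩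

theorem Ctx.M2 (h : Ctx c V W) {i : Fin d} {r q : S} (h1 : q ≠ r) (h2 : q ≠ c r) :
    Mm c V W i r + Mm c V W i q ≤ 11 := by
  have a := fs4_le (V := V) (i := i) (c := c) h1 h2
  have b := fs4_le (V := W) (i := i) (c := c) h1 h2
  have := h.M_def i r
  have := h.M_def i q
  have := h.n
  have := h.le
  omega

theorem Ctx.hat (h : Ctx c V W) {i : Fin d} {a : S} {w : Fin d → S} (hw : w ∈ W) (hwi : w i = a)
    (hempty : ∀ v ∈ V, v i ≠ a) (B : Fin d → EP c) (hB : In B (update w i (c a))) :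
    (∃ v ∈ V, In B v ∧ v i ≠ a ∧ v i ≠ c a) ∧ ∃ u ∈ W, u i = c a ∧ In B u := by
  have hflip : In (fp B i a) w := by
    have := in_fp_sw hB (i := i) (r := c a) (update_self _ _ _)
    rw [fp_c, hc.inv, update_idem, ← hwi, update_eq_self] at this
    exact hwi ▸ this
  obtain ⟨v, hv, hBv⟩ := (h.eq _).2 ⟨w, hw, hflip⟩
  have hv1 := hempty v hv
  have hv2 : v i ≠ c a := by
    intro e
    refine fp_notin (r := c a) hB (update_self _ _ _) e ?_
    rwa [fp_c]
  have hBv' := (in_fp hv1 hv2).1 hBv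
  refine ⟨⟨v, hv, hBv', hv1, hv2⟩, ?_⟩
  obtain ⟨u, hu, hBu⟩ := (h.eq _).1 ⟨v, hv, hBv'⟩
  refine ⟨u, hu, ?_, hBu⟩
  by_contra hne
  by_cases e : u i = a
  · have h1 := hB i
    rw [update_self] at h1
    exact notboth _ (e ▸ hBu i) h1
  · have := h.hW.uniqIn hu hw ((in_fp e hne).2 hBu) hflip
    exact e (this ▸ hwi)

theorem hat_notin (hT : TF c W) {i : Fin d} {a : S} {w : Fin d → S} (hw : w ∈ W) (hwi : w i = a) :
    update w i (c a) ∉ W := hwi ▸ hT w hw i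

theorem Ctx.step1 (h : Ctx c V W) {i : Fin d} {s : S} (hM : Mm c V W i s ≤ 5) {v : Fin d → S}
    (hv : v ∈ V) (hvi : v i = s) : ∃ w ∈ W, Mt c v w ∧ w i ≠ s ∧ w i ≠ c s := by
  by_contra hno
  push Not at hno
  have hsub : ∀ x ∈ V, x i = s → (∀ w ∈ W, Mt c x w → w i ≠ s → w i = c s) →
      fm c W x ⊆ fs W i s := by
    intro x hx hxi hno w hw
    obtain ⟨hw1, hw2⟩ := mem_fm.1 hw
    refine mem_fs.2 ⟨hw1, ?_⟩
    by_contra e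
    have := hno w hw1 hw2 e
    exact hw2 i (hxi ▸ this)
  have hM' := h.M_def i s
  have h5 := five h.hW h.tW (h.covW hv) (h.dj v hv)
  have hle := card_le_card (hsub v hv hvi hno)
  have hW5 : (fs W i s).card = 5 := by omega
  have hWeq : fm c W v = fs W i s := eq_of_subset_of_card_le (hsub v hv hvi hno) (by omega)
  have hVe : fs V i (c s) = ∅ := by rw [← card_eq_zero]; omega
  have hVe' : ∀ x ∈ V, x i ≠ c s := fun x hx e => by
    have : x ∈ fs V i (c s) := mem_fs.2 ⟨hx, e⟩
    rw [hVe] at this; simp at this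
  have star := five_star h.hW h.tW (h.covW hv) (h.dj v hv) (by omega)
  have hone : ∀ x ∈ V, x i = s → x = v := by
    intro x hx hxi
    by_contra hne
    have hxno : ∀ w ∈ W, Mt c x w → w i ≠ s → w i = c s := by
      intro w hw hm e1
      by_contra e2
      have hR := rel_of_cov h.hV (h.symm.covW hw) e1 e2
      have : (fs (fm c V w) i s).Nonempty := ⟨x, mem_fs.2 ⟨mem_fm.2 ⟨hx, hm.symm⟩, hxi⟩⟩
      obtain ⟨y, hy⟩ := hR.ne this
      exact hVe' y (fm_sub (mem_fs.1 hy).1) (mem_fs.1 hy).2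
    have h5x := five h.hW h.tW (h.covW hx) (h.dj x hx)
    have hWx : fm c W x = fs W i s := eq_of_subset_of_card_le (hsub x hx hxi hxno) (by omega)
    obtain ⟨t, ht⟩ := h.hV v hv x hx (Ne.symm hne)
    obtain ⟨w, hw, hwt⟩ := star t
    rw [hWeq, ← hWx] at hw
    apply (mem_fm.1 hw).2 t
    rw [hwt, ht, hc.inv]
  have hV1 : (fs V i s).card ≤ 1 := by
    rw [card_le_one]
    intro a ha b hb
    rw [hone a (mem_fs.1 ha).1 (mem_fs.1 ha).2, hone b (mem_fs.1 hb).1 (mem_fs.1 hb).2]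
  have hWne : (fs W i (c s)).Nonempty := by rw [← card_pos]; omega
  obtain ⟨w, hw⟩ := hWne
  obtain ⟨hw, hwi⟩ := mem_fs.1 hw
  have hhat := h.hat hw hwi hVe'
  rw [hc.inv] at hhat
  have hnot := hat_notin h.tW hw hwi
  rw [hc.inv] at hnot
  have hcov : Cov c (fs W i s) (update w i s) := by
    intro B hB
    obtain ⟨u, hu, hui, hBu⟩ := (hhat B hB).2
    exact ⟨u, mem_fs.2 ⟨hu, hui⟩, hBu⟩
  have h5x := five h.hW h.tW (hcov.mono fs_sub) hnot
  have hWx : fm c W (update w i s) = fs W i s :=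
    eq_of_subset_of_card_le (cov_sub h.hW hcov fs_sub) (by omega)
  have hnm : ¬ Mt c v (update w i s) := by
    intro hm
    obtain ⟨B, hB1, hB2⟩ := exIn hm
    obtain ⟨x, hx, hBx, hx1, hx2⟩ := (hhat B hB2).1
    have := h.hV.uniqIn hv hx hB1 hBx
    exact hx2 (this ▸ hvi)
  unfold Mt at hnm
  push Not at hnm
  obtain ⟨t, ht⟩ := hnm
  obtain ⟨u, hu, hut⟩ := star t
  rw [hWeq, ← hWx] at hu
  apply (mem_fm.1 hu).2 t
  rw [hut, ht, hc.inv]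

theorem Ctx.gne (h : Ctx c V W) {i : Fin d} {s : S} (hM : Mm c V W i s ≤ 5)
    (hne : (fs V i s).Nonempty) : (fs V i (c s)).Nonempty := by
  obtain ⟨v, hv⟩ := hne
  obtain ⟨hv, hvi⟩ := mem_fs.1 hv
  obtain ⟨w, hw, hm, h1, h2⟩ := h.step1 hM hv hvi
  have hR := rel_of_cov h.hV (h.symm.covW hw) h1 h2
  obtain ⟨y, hy⟩ := hR.ne ⟨v, mem_fs.2 ⟨mem_fm.2 ⟨hv, hm.symm⟩, hvi⟩⟩
  exact ⟨y, mem_fs.2 ⟨fm_sub (mem_fs.1 hy).1, (mem_fs.1 hy).2⟩⟩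

theorem fs_fm_sub {w : Fin d → S} {i : Fin d} {s : S} : fs (fm c V w) i s ⊆ fs V i s :=
  fun _ hx => mem_fs.2 ⟨fm_sub (mem_fs.1 hx).1, (mem_fs.1 hx).2⟩

theorem Ctx.gtwo (h : Ctx c V W) {i : Fin d} {s : S} (hM : Mm c V W i s ≤ 5)
    (hne : (fs V i s).Nonempty) : 2 ≤ (fs V i s).card := by
  by_contra hlt
  have h1 : (fs V i s).card = 1 := by have := hne.card_pos; omega
  obtain ⟨v, hv⟩ := hne
  obtain ⟨hv, hvi⟩ := mem_fs.1 hv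
  obtain ⟨w, hw, hm, e1, e2⟩ := h.step1 hM hv hvi
  have hR := rel_of_cov h.hV (h.symm.covW hw) e1 e2
  have hne : (fs (fm c V w) i s).Nonempty := ⟨v, mem_fs.2 ⟨mem_fm.2 ⟨hv, hm.symm⟩, hvi⟩⟩
  have hle := card_le_card (fs_fm_sub (c := c) (V := V) (w := w) (i := i) (s := s))
  have hle2 := card_le_card (fs_fm_sub (c := c) (V := V) (w := w) (i := i) (s := c s))
  have := hne.card_pos
  have h5 := hR.five h.hV h.tV (fs_sub.trans fm_sub) (fs_sub.trans fm_sub) (by omega)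
  have hM' := h.M_def i s
  have hWne : (fs W i (c s)).Nonempty := by rw [← card_pos]; omega
  have := h.symm.gne (i := i) (s := c s) (by rw [h.M_sw, h.M_c]; exact hM) hWne
  rw [hc.inv] at this
  have := this.card_pos
  omega

theorem Ctx.gempty (h : Ctx c V W) {i : Fin d} {s : S} (hM : Mm c V W i s ≤ 5)
    (h1 : fs V i s = ∅) (h2 : fs V i (c s) = ∅) (hne : (fs W i s).Nonempty) : False := by
  have hM' := h.M_def i s
  rw [h1, h2, card_empty] at hM'
  have hVe : ∀ x ∈ V, x i ≠ s := fun x hx e => by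
    have : x ∈ fs V i s := mem_fs.2 ⟨hx, e⟩
    rw [h1] at this; simp at this
  have key : ∀ w ∈ W, w i = s → Cov c W (update w i (c s)) ∧ update w i (c s) ∉ W ∧
      fm c W (update w i (c s)) = fs W i (c s) ∧ (fs W i (c s)).card = 5 := by
    intro w hw hwi
    have hcov : Cov c (fs W i (c s)) (update w i (c s)) := by
      intro B hB
      obtain ⟨u, hu, hui, hBu⟩ := (h.hat hw hwi hVe B hB).2
      exact ⟨u, mem_fs.2 ⟨hu, hui⟩, hBu⟩
    have hnot := hat_notin h.tW hw hwi
    have h5 := five h.hW h.tW (hcov.mono fs_sub) hnot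
    have hsub := cov_sub h.hW hcov fs_sub
    have := card_le_card hsub
    exact ⟨hcov.mono fs_sub, hnot, eq_of_subset_of_card_le hsub (by omega), by omega⟩
  obtain ⟨w, hw⟩ := hne
  obtain ⟨hw, hwi⟩ := mem_fs.1 hw
  obtain ⟨k1, k2, k3, k4⟩ := key w hw hwi
  have : 1 < (fs W i s).card := by omega
  obtain ⟨w2, hw2, hne⟩ := exists_mem_ne this w
  obtain ⟨hw2, hw2i⟩ := mem_fs.1 hw2
  obtain ⟨t, ht⟩ := h.hW w hw w2 hw2 hne.symm
  have hti : t ≠ i := by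
    rintro rfl
    rw [hwi, hw2i] at ht
    exact hc.ne _ ht.symm
  obtain ⟨u, hu, hut⟩ := five_star h.hW h.tW k1 k2 (by rw [k3, k4]) t
  obtain ⟨l1, l2, l3, l4⟩ := key w2 hw2 hw2i
  rw [k3, ← l3] at hu
  apply (mem_fm.1 hu).2 t
  rw [hut, update_of_ne hti, update_of_ne hti, ht, hc.inv]

theorem Ctx.G (h : Ctx c V W) {i : Fin d} {s : S} (hM : Mm c V W i s ≤ 5)
    (hne : (fs V i s).Nonempty) : 2 ≤ (fs V i s).card ∧ 2 ≤ (fs V i (c s)).card ∧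
      2 ≤ (fs W i s).card ∧ 2 ≤ (fs W i (c s)).card := by
  have hMc : Mm c V W i (c s) ≤ 5 := by rwa [h.M_c]
  have hMW : Mm c W V i s ≤ 5 := by rwa [h.M_sw]
  have hMWc : Mm c W V i (c s) ≤ 5 := by rwa [h.symm.M_c]
  have hne2 := h.gne hM hne
  have hW : (fs W i s).Nonempty := by
    by_contra he
    by_cases he2 : (fs W i (c s)).Nonempty
    · have := h.symm.gne hMWc he2
      rw [hc.inv] at this
      exact he this
    · rw [not_nonempty_iff_eq_empty] at he he2
      exact h.symm.gempty hMW he he2 hne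
  exact ⟨h.gtwo hM hne, h.gtwo hMc hne2, h.symm.gtwo hMW hW,
    h.symm.gtwo hMWc (h.symm.gne hMW hW)⟩

theorem Ctx.M4 (h : Ctx c V W) {i : Fin d} {s : S} {u : Fin d → S} (hu : u ∈ V ∨ u ∈ W)
    (hui : u i = s) : 4 ≤ Mm c V W i s := by
  by_contra hlt
  have hM' := h.M_def i s
  rcases hu with hu | hu
  · have := h.G (i := i) (s := s) (by omega) ⟨u, mem_fs.2 ⟨hu, hui⟩⟩
    omega
  · have := h.symm.G (i := i) (s := s) (by rw [h.M_sw]; omega) ⟨u, mem_fs.2 ⟨hu, hui⟩⟩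
    omega

theorem Ctx.M6 (h : Ctx c V W) {i : Fin d} {s : S} (h4 : 4 ≤ (fs V i s).card) :
    6 ≤ Mm c V W i s := by
  by_contra hlt
  have := h.G (i := i) (s := s) (by omega) (by rw [← card_pos]; omega)
  have hM' := h.M_def i s
  omega

theorem fs6_le {V : Finset (Fin d → S)} {i : Fin d} {r q e : S} (h1 : q ≠ r) (h2 : q ≠ c r)
    (h3 : r ≠ e) (h4 : r ≠ c e) (h5 : q ≠ e) (h6 : q ≠ c e) :
    (fs V i r).card + (fs V i (c r)).card + ((fs V i q).card + (fs V i (c q)).card) +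
    ((fs V i e).card + (fs V i (c e)).card) ≤ V.card := by
  have key : ∀ a, a ≠ e → a ≠ c e →
      fs (V.filter fun x => ¬ (x i = e ∨ x i = c e)) i a = fs V i a := by
    intro a h1 h2
    ext x
    simp only [mem_fs, mem_filter]
    constructor
    · rintro ⟨⟨h3, _⟩, h4⟩; exact ⟨h3, h4⟩
    · rintro ⟨h3, h4⟩; exact ⟨⟨h3, by rw [h4]; tauto⟩, h4⟩
  have hk : ∀ a, a ≠ e → a ≠ c e → c a ≠ e ∧ c a ≠ c e := by
    intro a h1 h2
    exact ⟨fun h => h2 (by rw [← h, hc.inv]), fun h => h1 (cinj h)⟩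
  have a := fs4_le (V := V.filter fun x => ¬ (x i = e ∨ x i = c e)) (i := i) (c := c) h1 h2
  rw [key _ h3 h4, key _ h5 h6, key _ (hk r h3 h4).1 (hk r h3 h4).2,
    key _ (hk q h5 h6).1 (hk q h5 h6).2] at a
  have b := card_filter_add_card_filter_not (s := V) (fun x => x i = e ∨ x i = c e)
  have : V.filter (fun x => x i = e ∨ x i = c e) = fs V i e ∪ fs V i (c e) := by
    rw [filter_or]; rfl
  rw [this, card_union_of_disjoint (fs_disj (hc.ne e).symm)] at b
  omega

theorem Ctx.twogr (h : Ctx c V W) {i : Fin d} {x y z : Fin d → S} (hx : x ∈ V ∨ x ∈ W)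
    (hy : y ∈ V ∨ y ∈ W) (hz : z ∈ V ∨ z ∈ W) (h1 : y i ≠ x i) (h2 : y i ≠ c (x i))
    (h3 : x i ≠ z i) (h4 : x i ≠ c (z i)) : y i = z i ∨ y i = c (z i) := by
  by_contra hcon
  rw [not_or] at hcon
  have a := fs6_le (V := V) (i := i) (c := c) h1 h2 h3 h4 hcon.1 hcon.2
  have b := fs6_le (V := W) (i := i) (c := c) h1 h2 h3 h4 hcon.1 hcon.2
  have := h.M_def i (x i)
  have := h.M_def i (y i)
  have := h.M_def i (z i)
  have := h.n
  have := h.le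
  have := h.M4 hx rfl (i := i)
  have := h.M4 hy rfl (i := i)
  have := h.M4 hz rfl (i := i)
  omega

end ctx
end PBC
namespace PBC
open Function Finset Classical
set_option linter.unusedSectionVars false
set_option linter.unusedVariables false

section tools
variable {S : Type*} {c : S → S} [hc : CC c] {d : ℕ}

theorem fp_comm (B : Fin d → EP c) {i j : Fin d} (h : j ≠ i) (r q : S) :
    fp (fp B i r) j q = fp (fp B j q) i r := by
  unfold fp
  rw [update_of_ne h, update_of_ne h.symm, update_comm h]

theorem rel_of_inv {Y : Finset (Fin d → S)} (hY : Code c Y) {w : Fin d → S} {j : Fin d} {q : S}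
    (hm : ∀ y ∈ Y, Mt c w y) (h1 : w j ≠ q) (h2 : w j ≠ c q)
    (hinv : ∀ B : Fin d → EP c, In B w → (∃ y ∈ Y, In B y) → ∃ y ∈ Y, In (fp B j q) y) :
    Rel c (fs Y j q) (fs Y j (c q)) w j q := by
  have half : ∀ a, (∀ B : Fin d → EP c, fp B j a = fp B j q) →
      ∀ B : Fin d → EP c, In B w → (∃ p ∈ fs Y j a, In B p) → ∃ p ∈ fs Y j (c a), In (fp B j q) p := by
    rintro a ha B hB ⟨p, hp, hBp⟩
    obtain ⟨hp, hpj⟩ := mem_fs.1 hp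
    obtain ⟨y, hy, hBy⟩ := hinv B hB ⟨p, hp, hBp⟩
    refine ⟨y, mem_fs.2 ⟨hy, ?_⟩, hBy⟩
    rw [← ha B] at hBy
    by_contra hne
    by_cases e : y j = a
    · exact fp_notin hBp hpj e hBy
    · have := hY.uniqIn hy hp ((in_fp e hne).1 hBy) hBp
      exact e (this ▸ hpj)
  refine ⟨h1, h2, fun p hp => ⟨(mem_fs.1 hp).2, hm _ (mem_fs.1 hp).1⟩,
    fun p hp => ⟨(mem_fs.1 hp).2, hm _ (mem_fs.1 hp).1⟩, fun B hB => ⟨half q (fun _ => rfl) B hB, ?_⟩⟩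
  intro h
  have := half (c q) (fun B => fp_c B j q) (fp B j q) ((in_fp h1 h2).2 hB) h
  rwa [fp_fp, hc.inv] at this

/-- all coordinates but two -/
def TT (i j : Fin d) : Set (Fin d) := {t | t ≠ i ∧ t ≠ j}

theorem ext2 {i j : Fin d} (hji : j ≠ i) (B : Fin d → EP c) (E F : EP c) (v : Fin d → S) :
    In (update (update B i E) j F) v ↔ InOn (TT i j) B v ∧ v i ∈ E.1 ∧ v j ∈ F.1 := by
  constructor
  · intro h
    refine ⟨fun t ht => ?_, ?_, ?_⟩
    · have := h t
      rwa [update_of_ne ht.2, update_of_ne ht.1] at this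
    · have := h i
      rwa [update_of_ne hji.symm, update_self] at this
    · have := h j
      rwa [update_self] at this
  · rintro ⟨h1, h2, h3⟩ t
    by_cases e : t = j
    · subst e; rwa [update_self]
    rw [update_of_ne e]
    by_cases e' : t = i
    · subst e'; rwa [update_self]
    rw [update_of_ne e']
    exact h1 t ⟨e', e⟩

theorem in_on {T : Set (Fin d)} {B : Fin d → EP c} {v : Fin d → S} (h : In B v) : InOn T B v :=
  fun t _ => h t

theorem inOn_fp {i j : Fin d} {r : S} {B : Fin d → EP c} {v : Fin d → S} :
    InOn (TT i j) (fp B i r) v ↔ InOn (TT i j) B v := by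
  unfold InOn
  refine forall_congr' fun t => imp_congr_right fun ht => ?_
  rw [fp_ne _ ht.1]

theorem inOn_fp' {i j : Fin d} {r : S} {B : Fin d → EP c} {v : Fin d → S} :
    InOn (TT i j) (fp B j r) v ↔ InOn (TT i j) B v := by
  unfold InOn
  refine forall_congr' fun t => imp_congr_right fun ht => ?_
  rw [fp_ne _ ht.2]

theorem onepiece {T : Set (Fin d)} {w x p : Fin d → S} (hx : ∀ t ∈ T, x t ≠ c (w t))
    (hp : ∀ t ∈ T, p t ≠ c (w t))
    (hiff : ∀ B : Fin d → EP c, InOn T B w → (InOn T B x ↔ InOn T B p)) :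
    ∀ t ∈ T, p t = x t := by
  intro t ht
  have h1 := cont hx ht (a := p t) (fun B h1 h2 => (hiff B h1).1 h2 t ht)
  have h2 := cont hp ht (a := x t) (fun B h1 h2 => (hiff B h1).2 h2 t ht)
  rcases h1 with h1 | h1
  · rcases h2 with h2 | h2
    · rw [h1, h2]
    · exact h2.symm
  · exact h1

theorem inOn_upd {T : Set (Fin d)} {B : Fin d → EP c} {x : Fin d → S} {l : Fin d} {a : S}
    (h : InOn T B (update x l a)) : (∀ t ∈ T, t ≠ l → x t ∈ (B t).1) ∧ (l ∈ T → a ∈ (B l).1) := by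
  refine ⟨fun t ht e => ?_, fun hl => ?_⟩
  · have := h t ht
    rwa [update_of_ne e] at this
  · have := h l hl
    rwa [update_self] at this

theorem twopiece_aux {T : Set (Fin d)} {w x p q : Fin d → S} (hx : ∀ t ∈ T, x t ≠ c (w t))
    (hp : ∀ t ∈ T, p t ≠ c (w t)) (hq : ∀ t ∈ T, q t ≠ c (w t))
    (hiff : ∀ B : Fin d → EP c, InOn T B w → (InOn T B x ↔ InOn T B p ∨ InOn T B q))
    {l : Fin d} (hl : l ∈ T) (hpq : q l = c (p l)) :
    p l ≠ w l ∧ x l = w l ∧ ∀ t ∈ T, t ≠ l → p t = x t := by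
  have a1 : ∀ t ∈ T, x t = w t ∨ x t = p t := fun t ht =>
    cont hp ht (fun B h1 h2 => (hiff B h1).2 (Or.inl h2) t ht)
  have a2 : ∀ t ∈ T, x t = w t ∨ x t = q t := fun t ht =>
    cont hq ht (fun B h1 h2 => (hiff B h1).2 (Or.inr h2) t ht)
  have hxl : x l = w l := by
    rcases a1 l hl with e | e
    · exact e
    rcases a2 l hl with e' | e'
    · exact e'
    rw [e, hpq] at e'
    exact absurd e'.symm (hc.ne _)
  refine ⟨?_, hxl, ?_⟩
  · intro e; rw [e] at hpq; exact hq l hl hpq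
  intro t ht htl
  have h1 : p t = w t ∨ p t = update x l (p l) t := by
    refine cont (c := c) ?_ ht ?_
    · intro t' ht'
      by_cases e : t' = l
      · subst e; rw [update_self]; exact hp _ hl
      · rw [update_of_ne e]; exact hx _ ht'
    · intro B h1 h2
      obtain ⟨k1, k2⟩ := inOn_upd h2
      have hBx : InOn T B x := by
        intro t' ht'
        by_cases e : t' = l
        · subst e; rw [hxl]; exact h1 _ hl
        · exact k1 t' ht' e
      rcases (hiff B h1).1 hBx with h | h
      · exact h t ht
      · have := h l hl
        rw [hpq] at this
        exact (notboth _ (k2 hl) this).elim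
  rw [update_of_ne htl] at h1
  rcases h1 with h1 | h1
  · rcases a1 t ht with h2 | h2
    · rw [h1, h2]
    · exact h2.symm
  · exact h1

theorem twopiece {T : Set (Fin d)} {w x p q : Fin d → S} (hx : ∀ t ∈ T, x t ≠ c (w t))
    (hp : ∀ t ∈ T, p t ≠ c (w t)) (hq : ∀ t ∈ T, q t ≠ c (w t))
    (hiff : ∀ B : Fin d → EP c, InOn T B w → (InOn T B x ↔ InOn T B p ∨ InOn T B q))
    {l : Fin d} (hl : l ∈ T) (hpq : q l = c (p l)) :
    p l ≠ w l ∧ q l ≠ w l ∧ x l = w l ∧ ∀ t ∈ T, t ≠ l → p t = x t ∧ q t = x t := by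
  obtain ⟨h1, h2, h3⟩ := twopiece_aux hx hp hq hiff hl hpq
  obtain ⟨k1, k2, k3⟩ := twopiece_aux hx hq hp (fun B hB => (hiff B hB).trans or_comm) hl
    (by rw [hpq, hc.inv])
  exact ⟨h1, k1, h2, fun t ht htl => ⟨h3 t ht htl, k3 t ht htl⟩⟩

theorem sub_pt {T : Set (Fin d)} {w x y : Fin d → S} (hx : ∀ t ∈ T, x t ≠ c (w t)) {t : Fin d}
    (ht : t ∈ T) (h1 : y t ≠ w t) (h2 : y t ≠ x t) :
    ∃ B : Fin d → EP c, InOn T B w ∧ InOn T B x ∧ ¬ InOn T B y := by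
  by_contra hno
  push Not at hno
  rcases cont hx ht (a := y t) (fun B h1 h2 => hno B h1 h2 t ht) with h | h
  · exact h1 h
  · exact h2 h

theorem four_card {P : Finset (Fin d → S)} {a b e f : Fin d → S} (ha : a ∈ P) (hb : b ∈ P)
    (he : e ∈ P) (hf : f ∈ P) (h1 : a ≠ b) (h2 : a ≠ e) (h3 : a ≠ f) (h4 : b ≠ e) (h5 : b ≠ f)
    (h6 : e ≠ f) : 4 ≤ P.card := by
  have : ({a, b, e, f} : Finset (Fin d → S)).card = 4 := by
    rw [card_insert_of_notMem, card_insert_of_notMem, card_insert_of_notMem, card_singleton] <;>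
      simp [h1, h2, h3, h4, h5, h6]
  rw [← this]
  apply card_le_card
  intro x hx
  simp only [mem_insert, mem_singleton] at hx
  rcases hx with rfl | rfl | rfl | rfl <;> assumption

theorem ne_at {a b : Fin d → S} (i : Fin d) (h : a i ≠ b i) : a ≠ b := fun e => h (e ▸ rfl)

end tools

section cfg
variable {S : Type*} {c : S → S} [hc : CC c] {d : ℕ}

variable (c) in
/-- the final configuration -/
structure Cfg (V W : Finset (Fin d → S)) (i j : Fin d) (s : S) (x y : Fin d → S) : Prop where
  ctx : Ctx c V W
  M5 : Mm c V W i s ≤ 5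
  xV : x ∈ V
  yV : y ∈ V
  xi : x i = s
  yi : y i = s
  only : ∀ v ∈ V, v i = s → v = x ∨ v = y
  opp : y j = c (x j)
  le3 : (fs V i (c s)).card ≤ 3

variable {V W : Finset (Fin d → S)} {i j : Fin d} {s : S} {x y : Fin d → S}

theorem Cfg.sw (h : Cfg c V W i j s x y) : Cfg c V W i j s y x where
  ctx := h.ctx
  M5 := h.M5
  xV := h.yV
  yV := h.xV
  xi := h.yi
  yi := h.xi
  only := fun v hv e => (h.only v hv e).symm
  opp := by rw [h.opp, hc.inv]
  le3 := h.le3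

variable (c) in
/-- the words of `W` used in the argument -/
structure U (W : Finset (Fin d → S)) (i : Fin d) (s : S) (x w : Fin d → S) : Prop where
  mem : w ∈ W
  n1 : w i ≠ s
  n2 : w i ≠ c s
  mt : Mt c x w

theorem Cfg.ji (h : Cfg c V W i j s x y) : j ≠ i := by
  rintro rfl
  have := h.opp
  rw [h.xi, h.yi] at this
  exact hc.ne _ this.symm

theorem Cfg.rel (h : Cfg c V W i j s x y) {w : Fin d → S} (hw : U c W i s x w) :
    Rel c (fs (fm c V w) i s) (fs (fm c V w) i (c s)) w i s :=
  rel_of_cov h.ctx.hV (h.ctx.symm.covW hw.mem) hw.n1 hw.n2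

theorem Cfg.Ysub (h : Cfg c V W i j s x y) {w : Fin d → S} :
    fs (fm c V w) i (c s) ⊆ V := fs_sub.trans fm_sub

theorem Cfg.Y3 (h : Cfg c V W i j s x y) {w : Fin d → S} :
    (fs (fm c V w) i (c s)).card ≤ 3 := (card_le_card fs_fm_sub).trans h.le3

theorem Cfg.two (h : Cfg c V W i j s x y) {w : Fin d → S} (hw : U c W i s x w) :
    2 ≤ (fs (fm c V w) i s).card ∧ 2 ≤ (fs (fm c V w) i (c s)).card := by
  refine (h.rel hw).two h.ctx.hV h.ctx.tV (fs_sub.trans fm_sub) (fs_sub.trans fm_sub)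
    ⟨x, mem_fs.2 ⟨mem_fm.2 ⟨h.xV, hw.mt.symm⟩, h.xi⟩⟩ ?_
  have h1 : fs (fm c V w) i s ⊆ {x, y} := by
    intro v hv
    rcases h.only v (fm_sub (mem_fs.1 hv).1) (mem_fs.1 hv).2 with e | e <;> simp [e]
  have := (card_le_card h1).trans card_le_two
  have := h.Y3 (w := w)
  omega

theorem Cfg.mt2 (h : Cfg c V W i j s x y) {w : Fin d → S} (hw : U c W i s x w) : Mt c y w := by
  obtain ⟨v, hv, hne⟩ := exists_mem_ne (lt_of_lt_of_le one_lt_two (h.two hw).1) x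
  obtain ⟨hv1, hvi⟩ := mem_fs.1 hv
  obtain ⟨hv1, hv2⟩ := mem_fm.1 hv1
  have := (h.only v hv1 hvi).resolve_left hne
  exact this ▸ hv2.symm

theorem Cfg.Usw (h : Cfg c V W i j s x y) {w : Fin d → S} (hw : U c W i s x w) :
    U c W i s y w := ⟨hw.mem, hw.n1, hw.n2, h.mt2 hw⟩

theorem Cfg.memY {w y' : Fin d → S} : y' ∈ fs (fm c V w) i (c s) ↔ y' ∈ V ∧ Mt c w y' ∧ y' i = c s := by
  rw [mem_fs, mem_fm, and_assoc]

theorem Cfg.iff (h : Cfg c V W i j s x y) {w : Fin d → S} (hw : U c W i s x w)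
    (B : Fin d → EP c) (hB : In B w) :
    (In B x ∨ In B y) ↔ ∃ p ∈ fs (fm c V w) i (c s), In (fp B i s) p := by
  rw [← (h.rel hw).iff B hB]
  constructor
  · rintro (h1 | h1)
    · exact ⟨x, mem_fs.2 ⟨mem_fm.2 ⟨h.xV, hw.mt.symm⟩, h.xi⟩, h1⟩
    · exact ⟨y, mem_fs.2 ⟨mem_fm.2 ⟨h.yV, (h.mt2 hw).symm⟩, h.yi⟩, h1⟩
  · rintro ⟨p, hp, h1⟩
    rcases h.only p (fm_sub (mem_fs.1 hp).1) (mem_fs.1 hp).2 with e | e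
    · left; exact e ▸ h1
    · right; exact e ▸ h1

theorem Cfg.wj1 (h : Cfg c V W i j s x y) {w : Fin d → S} (hw : U c W i s x w) : w j ≠ c (x j) :=
  hw.mt j

theorem Cfg.wj2 (h : Cfg c V W i j s x y) {w : Fin d → S} (hw : U c W i s x w) : w j ≠ x j := by
  have := h.mt2 hw j
  rwa [h.opp, hc.inv] at this

theorem Code.sub {V Y : Finset (Fin d → S)} (h : Code c V) (hs : Y ⊆ V) : Code c Y :=
  fun u hu v hv => h u (hs hu) v (hs hv)

theorem Cfg.claimB (h : Cfg c V W i j s x y) {w : Fin d → S} (hw : U c W i s x w) {p : Fin d → S}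
    (hp : p ∈ fs (fm c V w) i (c s)) : p j = x j ∨ p j = c (x j) ∨ p j = w j := by
  by_contra hcon
  rw [not_or, not_or] at hcon
  obtain ⟨h1, h2, h3⟩ := hcon
  obtain ⟨hpV, hpm, hpi⟩ := Cfg.memY.1 hp
  have hR : Rel c (fs (fs (fm c V w) i (c s)) j (p j)) (fs (fs (fm c V w) i (c s)) j (c (p j))) w j (p j) := by
    refine rel_of_inv (h.ctx.hV.sub h.Ysub) (fun y' hy => (Cfg.memY.1 hy).2.1) (Ne.symm h3)
      (ne_c_symm (hpm j)) ?_
    rintro B hB ⟨y', hy', hBy'⟩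
    have hB1 : In (fp B i s) w := (in_fp hw.n1 hw.n2).2 hB
    have a1 := (h.iff hw (fp B i s) hB1).2 ⟨y', hy', by rwa [fp_fp]⟩
    have a2 : In (fp (fp B i s) j (p j)) x ∨ In (fp (fp B i s) j (p j)) y := by
      rw [in_fp (v := x) (Ne.symm h1) (ne_c_symm h2), in_fp (v := y)]
      · exact a1
      · rw [h.opp]; exact Ne.symm h2
      · rw [h.opp]; exact fun e => h1 (cinj e).symm
    have a3 : In (fp (fp B i s) j (p j)) w := (in_fp (Ne.symm h3) (ne_c_symm (hpm j))).2 hB1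
    have := (h.iff hw _ a3).1 a2
    rwa [fp_comm _ h.ji, fp_fp] at this
  have h4 := hR.four h.ctx.hV h.ctx.tV (fs_sub.trans h.Ysub) (fs_sub.trans h.Ysub)
    ⟨p, mem_fs.2 ⟨hp, rfl⟩⟩
  have := fs2_le (V := fs (fm c V w) i (c s)) (i := j) (hc.ne (p j)).symm
  have := h.Y3 (w := w)
  omega

theorem Cfg.claimD (h : Cfg c V W i j s x y) {w : Fin d → S} (hw : U c W i s x w) :
    ∃ p ∈ fs (fm c V w) i (c s), p j = w j := by
  by_contra hno
  push Not at hno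
  have hR : Rel c {x} (fs (fs (fm c V w) i (c s)) j (x j)) w i s := by
    refine ⟨hw.n1, hw.n2, ?_, ?_, ?_⟩
    · intro p hp
      rw [mem_singleton] at hp
      subst hp
      exact ⟨h.xi, hw.mt.symm⟩
    · intro q hq
      obtain ⟨_, h1, h2⟩ := Cfg.memY.1 (fs_sub hq)
      exact ⟨h2, h1⟩
    · intro B hB
      constructor
      · rintro ⟨p, hp, hBp⟩
        rw [mem_singleton] at hp
        subst hp
        obtain ⟨q, hq, hBq⟩ := (h.iff hw B hB).1 (Or.inl hBp)
        refine ⟨q, mem_fs.2 ⟨hq, ?_⟩, hBq⟩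
        rcases h.claimB hw hq with e | e | e
        · exact e
        · have := hBq j
          rw [fp_ne _ h.ji, e] at this
          exact (notboth _ (hBp j) this).elim
        · exact absurd e (hno q hq)
      · rintro ⟨q, hq, hBq⟩
        obtain ⟨hq, hqj⟩ := mem_fs.1 hq
        refine ⟨x, by simp, ?_⟩
        rcases (h.iff hw B hB).2 ⟨q, hq, hBq⟩ with h1 | h1
        · exact h1
        · have a := hBq j
          rw [fp_ne _ h.ji, hqj] at a
          have b := h1 j
          rw [h.opp] at b
          exact (notboth _ a b).elim
  have h5 := hR.five h.ctx.hV h.ctx.tV (by simpa using h.xV) (fs_sub.trans h.Ysub) (by simp)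
  have := card_le_card (fs_sub (V := fs (fm c V w) i (c s)) (i := j) (s := x j))
  have := h.Y3 (w := w)
  omega

theorem Cfg.T1 (h : Cfg c V W i j s x y) {w : Fin d → S} (hw : U c W i s x w)
    (B : Fin d → EP c) (hB : InOn (TT i j) B w) :
    InOn (TT i j) B x ↔ ∃ p ∈ fs (fm c V w) i (c s), p j ≠ c (x j) ∧ InOn (TT i j) B p := by
  obtain ⟨F, hF1, hF2⟩ := es2 (h.wj1 hw)
  constructor
  · intro hx
    obtain ⟨E, hE1, hE2⟩ := es2 hw.n2
    obtain ⟨p, hp, hBp⟩ := (h.iff hw (update (update B i E) j F)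
      ((ext2 h.ji _ _ _ _).2 ⟨hB, hE2, hF2⟩)).1
      (Or.inl ((ext2 h.ji _ _ _ _).2 ⟨hx, h.xi ▸ hE1, hF1⟩))
    refine ⟨p, hp, ?_, ?_⟩
    · intro e
      have := hBp j
      rw [fp_ne _ h.ji, update_self, e] at this
      exact notboth _ hF1 this
    · have := inOn_fp.1 (in_on (T := TT i j) hBp)
      intro t ht
      have := this t ht
      rwa [update_of_ne ht.2, update_of_ne ht.1] at this
  · rintro ⟨p, hp, hpj, hBp⟩
    obtain ⟨E, hE1, hE2⟩ := es2 (c := c) (a := c s) (b := w i) (by rw [hc.inv]; exact hw.n1)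
    obtain ⟨_, _, hpi⟩ := Cfg.memY.1 hp
    have hpF : p j ∈ F.1 := by
      rcases h.claimB hw hp with e | e | e
      · rwa [e]
      · exact absurd e hpj
      · rwa [e]
    have a1 : In (update (update B i E) j F) p := (ext2 h.ji _ _ _ _).2 ⟨hBp, by rwa [hpi], hpF⟩
    have a2 : In (update (update B i E) j F) w := (ext2 h.ji _ _ _ _).2 ⟨hB, hE2, hF2⟩
    have := (h.iff hw (fp (update (update B i E) j F) i s) ((in_fp hw.n1 hw.n2).2 a2)).2
      ⟨p, hp, by rwa [fp_fp]⟩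
    rcases this with k | k
    · have := inOn_fp.1 (in_on (T := TT i j) k)
      intro t ht
      have := this t ht
      rwa [update_of_ne ht.2, update_of_ne ht.1] at this
    · have := k j
      rw [fp_ne _ h.ji, update_self, h.opp] at this
      exact (notboth _ hF1 this).elim

theorem Cfg.T2 (h : Cfg c V W i j s x y) {w : Fin d → S} (hw : U c W i s x w)
    (B : Fin d → EP c) (hB : InOn (TT i j) B w) :
    InOn (TT i j) B y ↔ ∃ p ∈ fs (fm c V w) i (c s), p j ≠ x j ∧ InOn (TT i j) B p := by
  have := h.sw.T1 (h.Usw hw) B hB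
  rwa [h.opp, hc.inv] at this

/-- two different members of `Y` not having letter `c (x j)` are opposite away from `i`, `j` -/
theorem Cfg.oppT (h : Cfg c V W i j s x y) {w : Fin d → S} (hw : U c W i s x w) {p q : Fin d → S}
    (hp : p ∈ fs (fm c V w) i (c s)) (hq : q ∈ fs (fm c V w) i (c s)) (hne : p ≠ q)
    (hpj : p j ≠ c (x j)) (hqj : q j ≠ c (x j)) : ∃ l ∈ TT i j, q l = c (p l) := by
  obtain ⟨hp1, hp2, hp3⟩ := Cfg.memY.1 hp
  obtain ⟨hq1, hq2, hq3⟩ := Cfg.memY.1 hq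
  obtain ⟨l, hl⟩ := h.ctx.hV p hp1 q hq1 hne
  refine ⟨l, ⟨?_, ?_⟩, hl⟩
  · rintro rfl
    rw [hp3, hq3] at hl
    exact hc.ne _ hl.symm
  · rintro rfl
    have a := h.wj1 hw
    rcases h.claimB hw hp with e | e | e
    · exact hqj (by rw [hl, e])
    · exact hpj e
    rcases h.claimB hw hq with e' | e' | e'
    · rw [e, e'] at hl
      exact a (by rw [hl, hc.inv])
    · exact hqj e'
    · rw [e, e'] at hl
      exact hc.ne _ hl.symm

/-- `x` and `y` differ away from `i`, `j` -/
theorem Cfg.neT (h : Cfg c V W i j s x y) : ∃ t ∈ TT i j, x t ≠ y t := by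
  by_contra hno
  push Not at hno
  refine h.ctx.tV.tw h.xV h.yV j h.opp fun t ht => ?_
  by_cases e : t = i
  · subst e; rw [h.xi, h.yi]
  · exact (hno t ⟨e, ht⟩).symm

theorem Cfg.mtT {w p : Fin d → S} (hm : Mt c w p) : ∀ t ∈ TT i j, p t ≠ c (w t) := fun t _ => hm t

theorem Cfg.star_aux (h : Cfg c V W i j s x y) {w1 w2 y1 y2 b : Fin d → S}
    (hw1 : U c W i s x w1) (hw2 : U c W i s x w2)
    (h1 : y1 ∈ fs (fm c V w1) i (c s)) (h2 : y2 ∈ fs (fm c V w2) i (c s)) (hne : y1 ≠ y2)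
    (hb : b j = c (x j)) (k1 : ∀ p ∈ fs (fm c V w1) i (c s), p = y1 ∨ p = b)
    (k2 : ∀ p ∈ fs (fm c V w2) i (c s), p = y2 ∨ p = b) (l1 : y1 j ≠ c (x j))
    (l2 : y2 j ≠ c (x j)) : False := by
  have key : ∀ w y1, U c W i s x w → y1 ∈ fs (fm c V w) i (c s) →
      (∀ p ∈ fs (fm c V w) i (c s), p = y1 ∨ p = b) → y1 j ≠ c (x j) →
      ∀ t ∈ TT i j, y1 t = x t := by
    intro w y1 hw h1 k1 l1
    refine onepiece (Cfg.mtT hw.mt.symm) (Cfg.mtT (Cfg.memY.1 h1).2.1) ?_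
    intro B hB
    rw [h.T1 hw B hB]
    constructor
    · rintro ⟨p, hp, hpj, hBp⟩
      rcases k1 p hp with e | e
      · exact e ▸ hBp
      · exact absurd (e ▸ hb) hpj
    · intro hB1
      exact ⟨y1, h1, l1, hB1⟩
  have e1 := key w1 y1 hw1 h1 k1 l1
  have e2 := key w2 y2 hw2 h2 k2 l2
  obtain ⟨m1, _, i1⟩ := Cfg.memY.1 h1
  obtain ⟨m2, _, i2⟩ := Cfg.memY.1 h2
  obtain ⟨t, ht⟩ := h.ctx.hV y1 m1 y2 m2 hne
  have agree : ∀ t, t ≠ j → y2 t = y1 t := by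
    intro t htj
    by_cases hti : t = i
    · subst hti; rw [i1, i2]
    · rw [e1 t ⟨hti, htj⟩, e2 t ⟨hti, htj⟩]
  by_cases htj : t = j
  · subst htj
    exact h.ctx.tV.tw m1 m2 t ht agree
  · rw [agree t htj] at ht
    exact hc.ne _ ht.symm

theorem Cfg.same (h : Cfg c V W i j s x y) {w1 w2 : Fin d → S}
    (hw1 : U c W i s x w1) (hw2 : U c W i s x w2) : w1 j = w2 j := by
  by_contra hne
  obtain ⟨y1, h1, e1⟩ := h.claimD hw1
  obtain ⟨y2, h2, e2⟩ := h.claimD hw2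
  have hy : y1 ≠ y2 := ne_at j (by rw [e1, e2]; exact hne)
  have l1 := h.wj1 hw1
  have l2 := h.wj1 hw2
  have m1 := h.wj2 hw1
  have m2 := h.wj2 hw2
  have n1 : y1 ∉ fs (fm c V w2) i (c s) := by
    intro hh
    rcases h.claimB hw2 hh with e | e | e
    · exact m1 (e1 ▸ e)
    · exact l1 (e1 ▸ e)
    · exact hne (e1 ▸ e)
  have n2 : y2 ∉ fs (fm c V w1) i (c s) := by
    intro hh
    rcases h.claimB hw1 hh with e | e | e
    · exact m2 (e2 ▸ e)
    · exact l2 (e2 ▸ e)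
    · exact hne (e2 ▸ e).symm
  obtain ⟨b, hb, hb1⟩ := exists_mem_ne (lt_of_lt_of_le one_lt_two (h.two hw1).2) y1
  have allc : ∀ a p q r : Fin d → S, a ∈ fs V i (c s) → p ∈ fs V i (c s) → q ∈ fs V i (c s) →
      r ∈ fs V i (c s) → p ≠ q → p ≠ r → q ≠ r → a = p ∨ a = q ∨ a = r := by
    intro a p q r ha hp hq hr h1 h2 h3
    by_contra hcon
    rw [not_or, not_or] at hcon
    have := four_card ha hp hq hr hcon.1 hcon.2.1 hcon.2.2 h1 h2 h3
    have := h.le3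
    omega
  have hb2 : b ≠ y2 := fun e => n2 (e ▸ hb)
  have k1 : ∀ p ∈ fs (fm c V w1) i (c s), p = y1 ∨ p = b := by
    intro p hp
    rcases allc p y1 y2 b (fs_fm_sub hp) (fs_fm_sub h1) (fs_fm_sub h2) (fs_fm_sub hb) hy
      hb1.symm hb2.symm with e | e | e
    · exact Or.inl e
    · exact absurd (e ▸ hp) n2
    · exact Or.inr e
  have k2 : ∀ p ∈ fs (fm c V w2) i (c s), p = y2 ∨ p = b := by
    intro p hp
    rcases allc p y1 y2 b (fs_fm_sub hp) (fs_fm_sub h1) (fs_fm_sub h2) (fs_fm_sub hb) hy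
      hb1.symm hb2.symm with e | e | e
    · exact absurd (e ▸ hp) n1
    · exact Or.inl e
    · exact Or.inr e
  have hbY2 : b ∈ fs (fm c V w2) i (c s) := by
    obtain ⟨b', hb', hb'1⟩ := exists_mem_ne (lt_of_lt_of_le one_lt_two (h.two hw2).2) y2
    exact ((k2 b' hb').resolve_left hb'1) ▸ hb'
  have hbj : b j = x j ∨ b j = c (x j) := by
    rcases h.claimB hw1 hb with e | e | e
    · exact Or.inl e
    · exact Or.inr e
    rcases h.claimB hw2 hbY2 with e' | e' | e'
    · exact Or.inl e'
    · exact Or.inr e'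
    exact absurd (e.symm.trans e') hne
  rcases hbj with e | e
  · refine h.sw.star_aux (h.Usw hw1) (h.Usw hw2) h1 h2 hy ?_ k1 k2 ?_ ?_
    · rw [h.opp, hc.inv, e]
    · rw [h.opp, hc.inv, e1]; exact m1
    · rw [h.opp, hc.inv, e2]; exact m2
  · exact h.star_aux hw1 hw2 h1 h2 hy e k1 k2 (by rwa [e1]) (by rwa [e2])

end cfg
end PBC
namespace PBC
open Function Finset Classical
set_option linter.unusedSectionVars false
set_option linter.unusedVariables false

section cfg2
variable {S : Type*} {c : S → S} [hc : CC c] {d : ℕ}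
variable {V W : Finset (Fin d → S)} {i j : Fin d} {s : S} {x y : Fin d → S}

theorem Cfg.exU (h : Cfg c V W i j s x y) : ∃ w, U c W i s x w := by
  obtain ⟨w, hw, hm, h1, h2⟩ := h.ctx.step1 h.M5 h.xV h.xi
  exact ⟨w, hw, h1, h2, hm⟩

theorem Cfg.relU (h : Cfg c V W i j s x y) {w : Fin d → S} (hw : U c W i s x w) :
    Rel c (fs (fm c W x) i (w i)) (fs (fm c W x) i (c (w i))) x i (w i) :=
  rel_of_cov h.ctx.hW (h.ctx.covW h.xV) (by rw [h.xi]; exact hw.n1.symm)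
    (by rw [h.xi]; exact ne_c_symm hw.n2)

theorem Cfg.memU1 (h : Cfg c V W i j s x y) {w u : Fin d → S} (hw : U c W i s x w)
    (hu : u ∈ fs (fm c W x) i (w i)) : U c W i s x u := by
  obtain ⟨h1, h2⟩ := mem_fs.1 hu
  obtain ⟨h1, h3⟩ := mem_fm.1 h1
  exact ⟨h1, h2 ▸ hw.n1, h2 ▸ hw.n2, h3⟩

theorem Cfg.memU2 (h : Cfg c V W i j s x y) {w u : Fin d → S} (hw : U c W i s x w)
    (hu : u ∈ fs (fm c W x) i (c (w i))) : U c W i s x u := by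
  obtain ⟨h1, h2⟩ := mem_fs.1 hu
  obtain ⟨h1, h3⟩ := mem_fm.1 h1
  refine ⟨h1, fun e => hw.n2 ?_, fun e => hw.n1 ?_, h3⟩
  · rw [← e, h2, hc.inv]
  · rw [h2] at e; exact cinj e

theorem Cfg.exU' (h : Cfg c V W i j s x y) {w : Fin d → S} (hw : U c W i s x w) :
    ∃ w', U c W i s x w' ∧ w' i = c (w i) := by
  obtain ⟨w', hw'⟩ := (h.relU hw).ne ⟨w, mem_fs.2 ⟨mem_fm.2 ⟨hw.mem, hw.mt⟩, rfl⟩⟩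
  exact ⟨w', h.memU2 hw hw', (mem_fs.1 hw').2⟩

/-- if all words of `U` share a letter at `t`, that letter is frequent -/
theorem Cfg.U4 (h : Cfg c V W i j s x y) {t : Fin d} {e : S} {w : Fin d → S} (hw : U c W i s x w)
    (h1 : ∀ u ∈ fs (fm c W x) i (w i), u t = e)
    (h2 : ∀ u ∈ fs (fm c W x) i (c (w i)), u t = e) : 6 ≤ Mm c V W t e := by
  have h4 := (h.relU hw).four h.ctx.hW h.ctx.tW (fs_sub.trans fm_sub) (fs_sub.trans fm_sub)
    ⟨w, mem_fs.2 ⟨mem_fm.2 ⟨hw.mem, hw.mt⟩, rfl⟩⟩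
  rw [← card_union_of_disjoint (fs_disj (hc.ne _).symm)] at h4
  rw [← h.ctx.M_sw]
  refine h.ctx.symm.M6 (h4.trans (card_le_card ?_))
  intro u hu
  rcases mem_union.1 hu with k | k
  · exact mem_fs.2 ⟨fm_sub (fs_sub k), h1 u k⟩
  · exact mem_fs.2 ⟨fm_sub (fs_sub k), h2 u k⟩

theorem Cfg.f3 (h : Cfg c V W i j s x y) : (fs V j (x j)).card ≤ 3 := by
  obtain ⟨w, hw⟩ := h.exU
  have h6 : 6 ≤ Mm c V W j (w j) := h.U4 hw (fun u hu => h.same (h.memU1 hw hu) hw)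
    (fun u hu => h.same (h.memU2 hw hu) hw)
  have := h.ctx.M2 (i := j) (h.wj2 hw) (h.wj1 hw)
  have := h.ctx.G (i := j) (s := x j) (by omega) ⟨x, mem_fs.2 ⟨h.xV, rfl⟩⟩
  have := h.ctx.M_def j (x j)
  omega

theorem Cfg.key (h : Cfg c V W i j s x y) {w : Fin d → S} (hw : U c W i s x w)
    (B : Fin d → EP c) (h1 : InOn (TT i j) B w) (h2 : InOn (TT i j) B y)
    (h3 : ¬ InOn (TT i j) B x) : ∃ v ∈ V, v j = x j ∧ v i = w i ∧ InOn (TT i j) B v := by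
  obtain ⟨E, hE1, hE2⟩ := es2 hw.n2
  obtain ⟨F, hF1, hF2⟩ := es2 (h.wj1 (h.sw.Usw (h.Usw hw)) |> fun _ => h.sw.wj1 (h.Usw hw))
  have aw : In (update (update B i E) j F) w := (ext2 h.ji _ _ _ _).2 ⟨h1, hE2, hF2⟩
  have ay : In (update (update B i E) j F) y := (ext2 h.ji _ _ _ _).2 ⟨h2, h.yi ▸ hE1, hF1⟩
  obtain ⟨v, hv, hBv⟩ := h.ctx.symm.covW hw.mem _ ((in_fp (r := x j) (h.wj2 hw) (h.wj1 hw)).2 aw)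
  have hvT : InOn (TT i j) B v := by
    have := inOn_fp'.1 (in_on (T := TT i j) hBv)
    intro t ht
    have := this t ht
    rwa [update_of_ne ht.2, update_of_ne ht.1] at this
  have hvE : v i ∈ E.1 := by
    have := hBv i
    rwa [fp_ne _ h.ji.symm, update_of_ne h.ji.symm, update_self] at this
  have hvj : v j = x j := by
    by_contra e
    by_cases e' : v j = c (x j)
    · refine fp_notin ay (h.opp) e' ?_
      rwa [fp_c]
    · have := h.ctx.hV.uniqIn hv h.yV ((in_fp e e').1 hBv) ay
      exact e' (this ▸ h.opp)
  refine ⟨v, hv, hvj, ?_, hvT⟩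
  have n1 : v i ≠ s := by
    intro e
    rcases h.only v hv e with e' | e'
    · exact h3 (e' ▸ hvT)
    · rw [e', h.opp] at hvj
      exact hc.ne _ hvj
  have n2 : v i ≠ c s := fun e => notboth E hE1 (e ▸ hvE)
  rcases h.ctx.twogr (i := i) (x := x) (y := v) (z := w) (Or.inl h.xV) (Or.inl hv) (Or.inr hw.mem)
    (by rwa [h.xi]) (by rwa [h.xi]) (by rw [h.xi]; exact hw.n1.symm)
    (by rw [h.xi]; exact ne_c_symm hw.n2) with e | e
  · exact e
  · exact (notboth E hE2 (e ▸ hvE)).elim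

theorem Cfg.alpha_aux (h : Cfg c V W i j s x y) {w p z z' : Fin d → S} (hw : U c W i s x w)
    (hp : p ∈ V) (hpj : p j = x j) (hpi : p i = c s) (hz : z ∈ V) (hzj : z j = x j)
    (hzi : z i = w i) (hz' : z' ∈ V) (hzj' : z' j = x j) (hzi' : z' i = c (w i)) : False := by
  have hcs := hc.ne s
  have hcw := hc.ne (w i)
  have := four_card (P := fs V j (x j)) (mem_fs.2 ⟨h.xV, rfl⟩) (mem_fs.2 ⟨hp, hpj⟩)
    (mem_fs.2 ⟨hz, hzj⟩) (mem_fs.2 ⟨hz', hzj'⟩)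
    (ne_at i (by rw [h.xi, hpi]; exact hcs.symm))
    (ne_at i (by rw [h.xi, hzi]; exact hw.n1.symm))
    (ne_at i (by rw [h.xi, hzi']; exact ne_c_symm hw.n2))
    (ne_at i (by rw [hpi, hzi]; exact hw.n2.symm))
    (ne_at i (by rw [hpi, hzi']; exact fun e => hw.n1 (cinj e).symm))
    (ne_at i (by rw [hzi, hzi']; exact hcw.symm))
  have := h.f3
  omega

theorem Cfg.Yall (h : Cfg c V W i j s x y) {w a b e : Fin d → S}
    (ha : a ∈ fs (fm c V w) i (c s)) (hb : b ∈ fs (fm c V w) i (c s))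
    (he : e ∈ fs (fm c V w) i (c s)) (h1 : a ≠ b) (h2 : a ≠ e) (h3 : b ≠ e) :
    ∀ p ∈ fs (fm c V w) i (c s), p = a ∨ p = b ∨ p = e := by
  intro p hp
  by_contra hcon
  rw [not_or, not_or] at hcon
  have := four_card hp ha hb he hcon.1 hcon.2.1 hcon.2.2 h1 h2 h3
  have := h.Y3 (w := w)
  omega

theorem Cfg.alpha (h : Cfg c V W i j s x y) {w p q o : Fin d → S} (hw : U c W i s x w)
    (hp : p ∈ fs (fm c V w) i (c s)) (hq : q ∈ fs (fm c V w) i (c s))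
    (ho : o ∈ fs (fm c V w) i (c s)) (hpj : p j = x j) (hqj : q j = c (x j)) (hoj : o j = w j) :
    False := by
  have l1 := h.wj1 hw
  have l2 := h.wj2 hw
  have hpq : p ≠ q := ne_at j (by rw [hpj, hqj]; exact (hc.ne _).symm)
  have hpo : p ≠ o := ne_at j (by rw [hpj, hoj]; exact l2.symm)
  have hqo : q ≠ o := ne_at j (by rw [hqj, hoj]; exact l1.symm)
  have all := h.Yall hp hq ho hpq hpo hqo
  have hpj' : p j ≠ c (x j) := by rw [hpj]; exact (hc.ne _).symm
  have hqj' : q j ≠ x j := by rw [hqj]; exact hc.ne _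
  have hoj1 : o j ≠ c (x j) := by rwa [hoj]
  have hoj2 : o j ≠ x j := by rwa [hoj]
  have mx := Cfg.mtT (i := i) (j := j) hw.mt.symm
  have my := Cfg.mtT (i := i) (j := j) (h.mt2 hw).symm
  have mp := Cfg.mtT (i := i) (j := j) (Cfg.memY.1 hp).2.1
  have mq := Cfg.mtT (i := i) (j := j) (Cfg.memY.1 hq).2.1
  have mo := Cfg.mtT (i := i) (j := j) (Cfg.memY.1 ho).2.1
  obtain ⟨l, hl, hlo⟩ := h.oppT hw hp ho hpo hpj' hoj1
  obtain ⟨m, hm, hmo⟩ := h.sw.oppT (h.Usw hw) hq ho hqo (by rwa [h.opp, hc.inv])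
    (by rwa [h.opp, hc.inv])
  obtain ⟨a1, a2, a3, a4⟩ := twopiece mx mp mo (by
    intro B hB
    rw [h.T1 hw B hB]
    constructor
    · rintro ⟨u, hu, huj, hBu⟩
      rcases all u hu with e | e | e
      · exact Or.inl (e ▸ hBu)
      · exact absurd (e ▸ hqj) huj
      · exact Or.inr (e ▸ hBu)
    · rintro (e | e)
      · exact ⟨p, hp, hpj', e⟩
      · exact ⟨o, ho, hoj1, e⟩) hl hlo
  obtain ⟨b1, b2, b3, b4⟩ := twopiece my mq mo (by
    intro B hB
    rw [h.T2 hw B hB]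
    constructor
    · rintro ⟨u, hu, huj, hBu⟩
      rcases all u hu with e | e | e
      · exact absurd (e ▸ hpj) huj
      · exact Or.inl (e ▸ hBu)
      · exact Or.inr (e ▸ hBu)
    · rintro (e | e)
      · exact ⟨q, hq, hqj', e⟩
      · exact ⟨o, ho, hoj2, e⟩) hm hmo
  by_cases hlm : l = m
  · subst hlm
    obtain ⟨t, ht, htne⟩ := h.neT
    by_cases e : t = l
    · subst e; exact htne (a3.trans b3.symm)
    · exact htne ((a4 t ht e).2.symm.trans (b4 t ht e).2)
  have xm : x m ≠ w m := by rw [← (a4 m hm (Ne.symm hlm)).2]; exact b2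
  have yl : y l ≠ w l := by rw [← (b4 l hl hlm).2]; exact a2
  have xym : x m ≠ y m := by rw [b3]; exact xm
  obtain ⟨B, hB1, hB2, hB3⟩ := sub_pt my hm xm xym
  obtain ⟨z, hz, hzj, hzi, _⟩ := h.key hw B hB1 hB2 hB3
  obtain ⟨B', hB1', hB2', hB3'⟩ := sub_pt mx hl yl (by rw [a3]; exact yl)
  obtain ⟨u, hu, huj, hui, _⟩ := h.sw.key (h.Usw hw) B' hB1' hB2' hB3'
  obtain ⟨w', hw', hwi'⟩ := h.exU' hw
  obtain ⟨hpV, _, hpi⟩ := Cfg.memY.1 hp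
  obtain ⟨hqV, _, hqi⟩ := Cfg.memY.1 hq
  by_cases e : x m = w' m
  · obtain ⟨B, hB1, hB2, hB3⟩ := sub_pt (w := w') (x := x) (y := y) (Cfg.mtT hw'.mt.symm) hm
      (by rw [← e]; exact xym.symm) xym.symm
    obtain ⟨u', hu', huj', hui', _⟩ := h.sw.key (h.Usw hw') B hB1 hB2 hB3
    exact h.sw.alpha_aux (h.Usw hw) hqV (by rw [hqj, h.opp]) hqi hu huj hui hu' huj'
      (by rw [hui', hwi'])
  · obtain ⟨B, hB1, hB2, hB3⟩ := sub_pt (w := w') (x := y) (y := x) (Cfg.mtT (h.mt2 hw').symm) hm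
      e xym
    obtain ⟨z', hz', hzj', hzi', _⟩ := h.key hw' B hB1 hB2 hB3
    exact h.alpha_aux hw hpV hpj hpi hz hzj hzi hz' hzj' (by rw [hzi', hwi'])

theorem Cfg.notnone (h : Cfg c V W i j s x y) {w : Fin d → S} (hw : U c W i s x w)
    (h1 : ∀ p ∈ fs (fm c V w) i (c s), p j ≠ x j)
    (h2 : ∀ p ∈ fs (fm c V w) i (c s), p j ≠ c (x j)) : False := by
  obtain ⟨t, ht, htne⟩ := h.neT
  refine htne (onepiece (w := w) (x := y) (p := x) (Cfg.mtT (h.mt2 hw).symm)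
    (Cfg.mtT hw.mt.symm) ?_ t ht)
  intro B hB
  rw [h.T1 hw B hB, h.T2 hw B hB]
  constructor
  · rintro ⟨p, hp, hpj, hBp⟩; exact ⟨p, hp, h2 p hp, hBp⟩
  · rintro ⟨p, hp, hpj, hBp⟩; exact ⟨p, hp, h1 p hp, hBp⟩

theorem Cfg.A1 (h : Cfg c V W i j s x y) {w : Fin d → S} (hw : U c W i s x w)
    (hA : ∀ p ∈ fs (fm c V w) i (c s), p j ≠ x j) :
    ∃ o ∈ fs (fm c V w) i (c s), ∃ q ∈ fs (fm c V w) i (c s), o j = w j ∧ q j = c (x j) ∧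
      ∀ t ∈ TT i j, o t = x t := by
  obtain ⟨o, ho, hoj⟩ := h.claimD hw
  have : ∃ q ∈ fs (fm c V w) i (c s), q j = c (x j) := by
    by_contra hno
    push Not at hno
    exact h.notnone hw hA hno
  obtain ⟨q, hq, hqj⟩ := this
  refine ⟨o, ho, q, hq, hoj, hqj, ?_⟩
  have l1 := h.wj1 hw
  have hoj1 : o j ≠ c (x j) := by rwa [hoj]
  have mx := Cfg.mtT (i := i) (j := j) hw.mt.symm
  have mo := Cfg.mtT (i := i) (j := j) (Cfg.memY.1 ho).2.1
  have uniq : ∀ p ∈ fs (fm c V w) i (c s), p j ≠ c (x j) → p = o := by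
    intro p hp hpj
    by_contra hne
    have hpj2 : p j = w j := by
      rcases h.claimB hw hp with e | e | e
      · exact absurd e (hA p hp)
      · exact absurd e hpj
      · exact e
    obtain ⟨l, hl, hlo⟩ := h.oppT hw hp ho hne hpj hoj1
    have all := h.Yall hp ho hq hne (ne_at j (by rw [hqj]; exact hpj)) (ne_at j (by rw [hqj]; exact hoj1))
    obtain ⟨a1, a2, a3, a4⟩ := twopiece mx (Cfg.mtT (Cfg.memY.1 hp).2.1) mo (by
      intro B hB
      rw [h.T1 hw B hB]
      constructor
      · rintro ⟨u, hu, huj, hBu⟩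
        rcases all u hu with e | e | e
        · exact Or.inl (e ▸ hBu)
        · exact Or.inr (e ▸ hBu)
        · exact absurd (e ▸ hqj) huj
      · rintro (e | e)
        · exact ⟨p, hp, hpj, e⟩
        · exact ⟨o, ho, hoj1, e⟩) hl hlo
    obtain ⟨pV, _, pi⟩ := Cfg.memY.1 hp
    obtain ⟨oV, _, oi⟩ := Cfg.memY.1 ho
    refine h.ctx.tV.tw pV oV l hlo fun t htl => ?_
    by_cases e1 : t = i
    · subst e1; rw [pi, oi]
    by_cases e2 : t = j
    · subst e2; rw [hpj2, hoj]
    rw [(a4 t ⟨e1, e2⟩ htl).1, (a4 t ⟨e1, e2⟩ htl).2]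
  refine onepiece mx mo fun B hB => ?_
  rw [h.T1 hw B hB]
  constructor
  · rintro ⟨u, hu, huj, hBu⟩
    exact uniq u hu huj ▸ hBu
  · intro e; exact ⟨o, ho, hoj1, e⟩

theorem Cfg.mixed (h : Cfg c V W i j s x y) {w w' : Fin d → S} (hw : U c W i s x w)
    (hw' : U c W i s x w') (hA : ∀ p ∈ fs (fm c V w) i (c s), p j ≠ x j)
    (hA' : ∀ p ∈ fs (fm c V w') i (c s), p j ≠ c (x j)) : False := by
  obtain ⟨o, ho, q, hq, hoj, hqj, hox⟩ := h.A1 hw hA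
  obtain ⟨o', ho', q', hq', hoj', hqj', hox'⟩ := h.sw.A1 (h.Usw hw') (by rwa [h.opp])
  rw [h.opp, hc.inv] at hqj'
  have hsame := h.same hw hw'
  by_cases e : o = o'
  · obtain ⟨t, ht, htne⟩ := h.neT
    exact htne (by rw [← hox t ht, ← hox' t ht, e])
  · have l1 := h.wj1 hw
    have l2 := h.wj2 hw
    have := four_card (fs_fm_sub ho) (fs_fm_sub ho') (fs_fm_sub hq) (fs_fm_sub hq') e
      (ne_at j (by rwa [hoj, hqj])) (ne_at j (by rwa [hoj, hqj']))
      (ne_at j (by rwa [hoj', hqj, ← hsame])) (ne_at j (by rwa [hoj', hqj', ← hsame]))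
      (ne_at j (by rw [hqj, hqj']; exact hc.ne _))
    have := h.le3
    omega

theorem Cfg.dich (h : Cfg c V W i j s x y) {w : Fin d → S} (hw : U c W i s x w) :
    (∀ p ∈ fs (fm c V w) i (c s), p j ≠ x j) ∨ (∀ p ∈ fs (fm c V w) i (c s), p j ≠ c (x j)) := by
  by_contra hcon
  rw [not_or] at hcon
  push Not at hcon
  obtain ⟨⟨p, hp, hpj⟩, q, hq, hqj⟩ := hcon
  obtain ⟨o, ho, hoj⟩ := h.claimD hw
  exact h.alpha hw hp hq ho hpj hqj hoj

/-- under side `A`, `x` is contained in `y` on `w` -/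
theorem Cfg.Asub (h : Cfg c V W i j s x y) {w : Fin d → S} (hw : U c W i s x w)
    (hA : ∀ p ∈ fs (fm c V w) i (c s), p j ≠ x j) (B : Fin d → EP c) (hB : InOn (TT i j) B w)
    (hBx : InOn (TT i j) B x) : InOn (TT i j) B y := by
  obtain ⟨p, hp, hpj, hBp⟩ := (h.T1 hw B hB).1 hBx
  exact (h.T2 hw B hB).2 ⟨p, hp, hA p hp, hBp⟩

theorem Cfg.Akey (h : Cfg c V W i j s x y) {w : Fin d → S} (hw : U c W i s x w)
    (hA : ∀ p ∈ fs (fm c V w) i (c s), p j ≠ x j) : ∃ z ∈ V, z j = x j ∧ z i = w i := by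
  obtain ⟨t, ht, htne⟩ := h.neT
  by_cases e : x t = w t
  · obtain ⟨B, h1, h2, h3⟩ := sub_pt (w := w) (x := x) (y := y) (Cfg.mtT hw.mt.symm) ht
      (by rw [← e]; exact htne.symm) htne.symm
    exact absurd (h.Asub hw hA B h1 h2) h3
  · obtain ⟨B, h1, h2, h3⟩ := sub_pt (w := w) (x := y) (y := x) (Cfg.mtT (h.mt2 hw).symm) ht e htne
    obtain ⟨z, hz, hzj, hzi, _⟩ := h.key hw B h1 h2 h3
    exact ⟨z, hz, hzj, hzi⟩

/-- the structure of `z` -/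
theorem Cfg.beta1 (h : Cfg c V W i j s x y) {w z : Fin d → S} (hw : U c W i s x w)
    (hA : ∀ p ∈ fs (fm c V w) i (c s), p j ≠ x j)
    (hz : ∀ B : Fin d → EP c, InOn (TT i j) B w → InOn (TT i j) B y → ¬ InOn (TT i j) B x →
      InOn (TT i j) B z) {l : Fin d} (hl : l ∈ TT i j) (hzl : z l = c (x l)) :
    (∀ t ∈ TT i j, t ≠ l → x t = y t) ∧ x l ≠ y l ∧
      (∀ t ∈ TT i j, t ≠ l → z t = w t ∨ z t = y t) := by
  have mx := Cfg.mtT (i := i) (j := j) hw.mt.symm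
  have my := Cfg.mtT (i := i) (j := j) (h.mt2 hw).symm
  have a : ∀ t ∈ TT i j, y t = w t ∨ y t = x t := fun t ht =>
    cont mx ht (fun B h1 h2 => h.Asub hw hA B h1 h2 t ht)
  have b : ∀ t ∈ TT i j, t ≠ l → x t = y t := by
    intro t ht htl
    by_contra hne
    have yt : y t = w t := (a t ht).resolve_right (Ne.symm hne)
    obtain ⟨B, h1, h2⟩ := exOn (c := c) (T := TT i j) (w := w)
      (x := update (update y t (c (x t))) l (x l)) (by
        intro t' ht'
        by_cases e : t' = l
        · subst e; rw [update_self]; exact mx _ ht'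
        rw [update_of_ne e]
        by_cases e' : t' = t
        · subst e'; rw [update_self, ← yt]; exact fun k => hne (cinj k)
        rw [update_of_ne e']; exact my _ ht')
    obtain ⟨k1, k2⟩ := inOn_upd h2
    have kt := k1 t ht htl
    rw [update_self] at kt
    have k3 := k2 hl
    have hy : InOn (TT i j) B y := by
      intro t' ht'
      by_cases e : t' = l
      · subst e
        rcases a t' ht' with e | e
        · rw [e]; exact h1 _ ht'
        · rw [e]; exact k3
      by_cases e' : t' = t
      · subst e'; rw [yt]; exact h1 _ ht'
      · have := k1 t' ht' e
        rwa [update_of_ne e'] at this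
    have := hz B h1 hy (fun hx => notboth _ (hx t ht) kt) l hl
    rw [hzl] at this
    exact notboth _ k3 this
  have hxl : x l ≠ y l := by
    obtain ⟨t, ht, htne⟩ := h.neT
    by_cases e : t = l
    · exact e ▸ htne
    · exact absurd (b t ht e) htne
  refine ⟨b, hxl, fun t ht htl => ?_⟩
  have yl : y l = w l := (a l hl).resolve_right (Ne.symm hxl)
  have := cont (c := c) (T := TT i j) (w := w) (x := update y l (c (x l))) (t := t) (a := z t) (by
      intro t' ht'
      by_cases e : t' = l
      · subst e; rw [update_self, ← yl]; exact fun k => hxl (cinj k)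
      rw [update_of_ne e]; exact my _ ht') ht (by
      intro B h1 h2
      obtain ⟨k1, k2⟩ := inOn_upd h2
      have hy : InOn (TT i j) B y := by
        intro t' ht'
        by_cases e : t' = l
        · subst e; rw [yl]; exact h1 _ ht'
        · exact k1 t' ht' e
      exact hz B h1 hy (fun hx => notboth _ (hx l hl) (k2 hl)) t ht)
  rwa [update_of_ne htl] at this

theorem Cfg.beta2 (h : Cfg c V W i j s x y)
    (hA : ∀ w, U c W i s x w → ∀ p ∈ fs (fm c V w) i (c s), p j ≠ x j) {w z : Fin d → S}
    (hw : U c W i s x w) {t : Fin d} (ht : t ∈ TT i j) (hxy : x t = y t) (hzt : z t ≠ y t)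
    (hall : ∀ u, U c W i s x u → u i = w i → z t = u t ∨ z t = y t) : False := by
  have h1 : ∀ u, U c W i s x u → u i = w i → u t = z t := fun u hu e =>
    ((hall u hu e).resolve_right hzt).symm
  have hR := h.relU hw
  have h6 : 6 ≤ Mm c V W t (z t) := by
    refine h.U4 hw (fun u hu => h1 u (h.memU1 hw hu) (mem_fs.1 hu).2) ?_
    intro u hu
    have hu' := h.memU2 hw hu
    have := contIn (w := x) (x := u) hu'.mt (t := t) (a := z t) (by
      intro B hB1 hB2
      obtain ⟨p, hp, hBp⟩ := (hR.symm.iff B hB1).1 ⟨u, hu, hB2⟩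
      have := hBp t
      rwa [fp_ne _ ht.1, h1 p (h.memU1 hw hp) (mem_fs.1 hp).2] at this)
    rcases this with e | e
    · exact absurd (e.trans hxy) hzt
    · exact e.symm
  have hwt := h1 w hw rfl
  obtain ⟨o, ho, q, hq, hoj, hqj, hox⟩ := h.A1 hw (hA w hw)
  obtain ⟨oV, _, oi⟩ := Cfg.memY.1 ho
  obtain ⟨qV, qm, qi⟩ := Cfg.memY.1 hq
  have hqt : q t = y t := by
    have := cont (Cfg.mtT (i := i) (j := j) qm) ht (a := y t) (fun B hB1 hB2 =>
      (h.T2 hw B hB1).2 ⟨q, hq, hA w hw q hq, hB2⟩ t ht)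
    rcases this with e | e
    · exact absurd (hwt.symm.trans e.symm) hzt
    · exact e.symm
  have hcs := hc.ne s
  have hcx := hc.ne (x j)
  have h4 := four_card (P := fs V t (y t)) (mem_fs.2 ⟨h.xV, hxy⟩) (mem_fs.2 ⟨h.yV, rfl⟩)
    (mem_fs.2 ⟨oV, (hox t ht).trans hxy⟩) (mem_fs.2 ⟨qV, hqt⟩)
    (ne_at j (by rw [h.opp]; exact hcx.symm)) (ne_at i (by rw [h.xi, oi]; exact hcs.symm))
    (ne_at i (by rw [h.xi, qi]; exact hcs.symm)) (ne_at i (by rw [h.yi, oi]; exact hcs.symm))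
    (ne_at i (by rw [h.yi, qi]; exact hcs.symm))
    (ne_at j (by rw [hoj, hqj]; exact h.wj1 hw))
  have := h.ctx.M6 h4
  have hm : z t ≠ c (y t) := by
    rw [← hwt, ← hxy]; exact hw.mt t
  have := h.ctx.M2 (i := t) hzt hm
  omega

theorem Cfg.oppz (h : Cfg c V W i j s x y) {w z : Fin d → S} (hw : U c W i s x w) (hz : z ∈ V)
    (hzj : z j = x j) (hzi : z i = w i) : ∃ l ∈ TT i j, z l = c (x l) := by
  obtain ⟨l, hl⟩ := h.ctx.hV x h.xV z hz (ne_at i (by rw [h.xi, hzi]; exact hw.n1.symm))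
  refine ⟨l, ⟨?_, ?_⟩, hl⟩
  · rintro rfl
    rw [hzi, h.xi] at hl
    exact hw.n2 hl
  · rintro rfl
    rw [hzj] at hl
    exact hc.ne _ hl.symm

theorem Cfg.allA (h : Cfg c V W i j s x y)
    (hA : ∀ w, U c W i s x w → ∀ p ∈ fs (fm c V w) i (c s), p j ≠ x j) : False := by
  obtain ⟨w, hw⟩ := h.exU
  obtain ⟨w', hw', hwi'⟩ := h.exU' hw
  obtain ⟨z, hz, hzj, hzi⟩ := h.Akey hw (hA w hw)
  obtain ⟨z', hz', hzj', hzi'⟩ := h.Akey hw' (hA w' hw')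
  have hcw := hc.ne (w i)
  have hxz : x ≠ z := ne_at i (by rw [h.xi, hzi]; exact hw.n1.symm)
  have hxz' : x ≠ z' := ne_at i (by rw [h.xi, hzi']; exact hw'.n1.symm)
  have hzz' : z ≠ z' := ne_at i (by rw [hzi, hzi', hwi']; exact hcw.symm)
  have all : ∀ v ∈ V, v j = x j → v = x ∨ v = z ∨ v = z' := by
    intro v hv hvj
    by_contra hcon
    rw [not_or, not_or] at hcon
    have := four_card (P := fs V j (x j)) (mem_fs.2 ⟨hv, hvj⟩) (mem_fs.2 ⟨h.xV, rfl⟩)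
      (mem_fs.2 ⟨hz, hzj⟩) (mem_fs.2 ⟨hz', hzj'⟩) hcon.1 hcon.2.1 hcon.2.2 hxz hxz' hzz'
    have := h.f3
    omega
  have k : ∀ u, U c W i s x u → u i = w i → ∀ B : Fin d → EP c, InOn (TT i j) B u →
      InOn (TT i j) B y → ¬ InOn (TT i j) B x → InOn (TT i j) B z := by
    intro u hu hui B h1 h2 h3
    obtain ⟨v, hv, hvj, hvi, hBv⟩ := h.key hu B h1 h2 h3
    rcases all v hv hvj with e | e | e
    · exact absurd (e ▸ hBv) h3
    · exact e ▸ hBv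
    · rw [e, hzi', hwi', hui] at hvi
      exact absurd hvi hcw
  have k' : ∀ u, U c W i s x u → u i = w' i → ∀ B : Fin d → EP c, InOn (TT i j) B u →
      InOn (TT i j) B y → ¬ InOn (TT i j) B x → InOn (TT i j) B z' := by
    intro u hu hui B h1 h2 h3
    obtain ⟨v, hv, hvj, hvi, hBv⟩ := h.key hu B h1 h2 h3
    rcases all v hv hvj with e | e | e
    · exact absurd (e ▸ hBv) h3
    · rw [e, hzi, hui, hwi'] at hvi
      exact absurd hvi.symm hcw
    · exact e ▸ hBv
  obtain ⟨l, hl, hzl⟩ := h.oppz hw hz hzj hzi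
  obtain ⟨l', hl', hzl'⟩ := h.oppz hw' hz' hzj' hzi'
  obtain ⟨a1, a2, a3⟩ := h.beta1 hw (hA w hw) (k w hw rfl) hl hzl
  obtain ⟨b1, b2, b3⟩ := h.beta1 hw' (hA w' hw') (k' w' hw' rfl) hl' hzl'
  have hll : l = l' := by
    by_contra hne
    exact a2 (b1 l hl hne)
  subst hll
  have : ∃ t ∈ TT i j, t ≠ l ∧ z t ≠ z' t := by
    by_contra hno
    push Not at hno
    refine h.ctx.tV.tw hz hz' i (by rw [hzi', hwi', hzi]) fun t hti => ?_
    by_cases e1 : t = j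
    · subst e1; rw [hzj, hzj']
    by_cases e2 : t = l
    · subst e2; rw [hzl, hzl']
    exact (hno t ⟨hti, e1⟩ e2).symm
  obtain ⟨t, ht, htl, hne⟩ := this
  by_cases e : z t = y t
  · exact h.beta2 hA hw' (z := z') ht (a1 t ht htl) (by rw [← e]; exact hne.symm)
      (fun u hu hui => (h.beta1 hu (hA u hu) (k' u hu hui) hl hzl').2.2 t ht htl)
  · exact h.beta2 hA hw ht (a1 t ht htl) e
      (fun u hu hui => (h.beta1 hu (hA u hu) (k u hu hui) hl hzl).2.2 t ht htl)

theorem Cfg.final (h : Cfg c V W i j s x y) : False := by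
  by_cases hA : ∀ w, U c W i s x w → ∀ p ∈ fs (fm c V w) i (c s), p j ≠ x j
  · exact h.allA hA
  · have : ∃ w, U c W i s x w ∧ ¬ ∀ p ∈ fs (fm c V w) i (c s), p j ≠ x j := by
      by_contra hno
      push Not at hno
      exact hA hno
    obtain ⟨w, hw, hnA⟩ := this
    have hA' := (h.dich hw).resolve_left hnA
    refine h.sw.allA fun u hu => ?_
    have hu' := h.sw.Usw hu
    rw [h.opp]
    rcases h.dich hu' with k | k
    · exact (h.mixed hu' hw k hA').elim
    · exact k

theorem Ctx.final_aux (h : Ctx c V W) {i : Fin d} {s : S} (hM : Mm c V W i s ≤ 5)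
    (h2 : (fs V i s).card = 2) : False := by
  have hG := h.G hM (by rw [← card_pos]; omega)
  have hM' := h.M_def i s
  obtain ⟨x, y, hxy, he⟩ := card_eq_two.1 h2
  have hx : x ∈ fs V i s := by rw [he]; simp
  have hy : y ∈ fs V i s := by rw [he]; simp
  obtain ⟨j, hj⟩ := h.hV x (fs_sub hx) y (fs_sub hy) hxy
  refine Cfg.final (c := c) (V := V) (W := W) (i := i) (j := j) (s := s) (x := x) (y := y)
    ⟨h, hM, fs_sub hx, fs_sub hy, (mem_fs.1 hx).2, (mem_fs.1 hy).2, ?_, hj, by omega⟩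
  intro v hv hvi
  have : v ∈ fs V i s := mem_fs.2 ⟨hv, hvi⟩
  rw [he] at this
  simpa using this

theorem Ctx.final_small (h : Ctx c V W) {i : Fin d} {s : S} (hM : Mm c V W i s ≤ 5)
    (hne : (fs V i s).Nonempty) : False := by
  have hG := h.G hM hne
  have hM' := h.M_def i s
  by_cases h2 : (fs V i s).card = 2
  · exact h.final_aux hM h2
  · exact h.symm.final_aux (i := i) (s := c s) (by rw [h.M_sw, h.M_c]; exact hM) (by omega)

theorem Ctx.empty (h : Ctx c V W) : V = ∅ := by
  by_contra hne
  obtain ⟨v, hv⟩ := nonempty_iff_ne_empty.2 hne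
  obtain ⟨B, hB⟩ := exIn1 (c := c) v
  obtain ⟨w, hw, hBw⟩ := h.covW hv B hB
  have hm := mt_of_in hB hBw
  have hwv : w ≠ v := fun e => h.dj v hv (e ▸ hw)
  obtain ⟨i, hi⟩ := Function.ne_iff.1 hwv
  have := h.M2 (i := i) hi (hm i)
  by_cases h5 : Mm c V W i (v i) ≤ 5
  · exact h.final_small h5 ⟨v, mem_fs.2 ⟨hv, rfl⟩⟩
  · exact h.symm.final_small (i := i) (s := w i) (by rw [h.M_sw]; omega) ⟨w, mem_fs.2 ⟨hw, rfl⟩⟩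

/-- the theorem for finsets -/
theorem main [Fintype S] {V W : Finset (Fin d → S)} (hV : Code c V) (hW : Code c W) (tV : TF c V)
    (tW : TF c W) (he : ∀ B : Fin d → EP c, (∃ v ∈ V, In B v) ↔ ∃ w ∈ W, In B w)
    (hle : V.card ≤ 11) : W = V := by
  have half : ∀ {V W : Finset (Fin d → S)}, Code c V → Code c W →
      (∀ B : Fin d → EP c, (∃ v ∈ V, In B v) ↔ ∃ w ∈ W, In B w) →
      ∀ B : Fin d → EP c, (∃ v ∈ V \ W, In B v) → ∃ w ∈ W \ V, In B w := by
    intro V W hV hW he B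
    rintro ⟨v, hv, hBv⟩
    rw [mem_sdiff] at hv
    obtain ⟨w, hw, hBw⟩ := (he B).1 ⟨v, hv.1, hBv⟩
    refine ⟨w, mem_sdiff.2 ⟨hw, fun hwV => hv.2 ?_⟩, hBw⟩
    rw [hV.uniqIn hv.1 hwV hBv hBw]; exact hw
  have he' : ∀ B : Fin d → EP c, (∃ v ∈ V \ W, In B v) ↔ ∃ w ∈ W \ V, In B w := fun B =>
    ⟨half hV hW he B, half hW hV (fun B => (he B).symm) B⟩
  have cV := hV.sub (sdiff_subset (s := V) (t := W))
  have cW := hW.sub (sdiff_subset (s := W) (t := V))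
  obtain ⟨hn, hb⟩ := count_eq cV cW he'
  have ctx : Ctx c (V \ W) (W \ V) :=
    { hV := cV
      hW := cW
      tV := fun u hu j hm => tV u (mem_sdiff.1 hu).1 j (mem_sdiff.1 hm).1
      tW := fun u hu j hm => tW u (mem_sdiff.1 hu).1 j (mem_sdiff.1 hm).1
      dj := fun v hv hw => (mem_sdiff.1 hw).2 (mem_sdiff.1 hv).1
      eq := he'
      n := hn
      le := (card_le_card sdiff_subset).trans hle
      bal := hb }
  have e1 := ctx.empty
  have e2 := ctx.symm.empty
  rw [sdiff_eq_empty_iff_subset] at e1 e2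
  exact Subset.antisymm e2 e1

end cfg2
end PBC

/-- If `V, W ⊆ S^d` are equivalent polybox codes, neither of which contains a
twin pair, and `|V| ≤ 11`, then `W = V`. -/
theorem eq_of_equiv_card_le_eleven {S : Type*} [Fintype S] (c : S → S)
    (hinv : ∀ s, c (c s) = s) (hne : ∀ s, c s ≠ s) {d : ℕ}
    (V W : Set (Fin d → S))
    (hV : PolyboxCode c V) (hW : PolyboxCode c W)
    (hequiv : Equivalent c V W)
    (hVtf : ∀ u ∈ V, ∀ v ∈ V, ¬ TwinPair c u v)
    (hWtf : ∀ u ∈ W, ∀ v ∈ W, ¬ TwinPair c u v)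
    (hcard : V.ncard ≤ 11) :
    W = V := by
  have : PBC.CC c := ⟨hinv, hne⟩
  have fV := Set.toFinite V
  have fW := Set.toFinite W
  have htf : ∀ X : Set (Fin d → S), ∀ fX : X.Finite, (∀ u ∈ X, ∀ v ∈ X, ¬ TwinPair c u v) →
      PBC.TF c fX.toFinset := by
    intro X fX h u hu j hm
    rw [Set.Finite.mem_toFinset] at hu hm
    refine h u hu _ hm ⟨j, by simp, fun t ht => ?_⟩
    rw [Function.update_of_ne ht]
  have hcode : ∀ X : Set (Fin d → S), ∀ fX : X.Finite, PolyboxCode c X →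
      PBC.Code c fX.toFinset := by
    intro X fX h u hu v hv hne
    rw [Set.Finite.mem_toFinset] at hu hv
    exact h u hu v hv hne
  have key := PBC.main (c := c) (hcode V fV hV) (hcode W fW hW) (htf V fV hVtf) (htf W fW hWtf)
    (by
      intro B
      have h1 : ∀ v : Fin d → S, (fun t => (B t).1) ∈ realize c v ↔ PBC.In B v := by
        intro v
        constructor
        · intro h t; exact (h t).2
        · intro h t; exact ⟨(B t).2, h t⟩
      have h2 := Set.ext_iff.1 hequiv (fun t => (B t).1)
      simp only [Set.mem_iUnion, h1, exists_prop] at h2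
      simpa only [Set.Finite.mem_toFinset] using h2)
    (by rw [← Set.ncard_eq_toFinset_card V fV]; exact hcard)
  exact (Set.Finite.toFinset_inj).1 key
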